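/- Let μ_α and μ_β satisfy Assumption 2, let ω_α, ω_β be subordination functions for the pair, let μ_α ⊞ μ_β be the associated free additive convolution with continuous density ρ_{α⊞β}, and let E₀ be an interior point of 𝒱_{α⊞β}. Then there exist constants C₂ > 0, K > 0 and δ > 0 such that |ρ_{α⊞β}(E) − C₂·|E − E₀|^{1/3}| ≤ K·|E − E₀|^{2/3} for all E with 0 < |E − E₀| < δ; i.e. ρ_{α⊞β} exhibits a two-sided cubic-root cusp at E₀. -/

import Mathlib

open MeasureTheory Complex Set Filter Topology

noncomputable section

/-- Cauchy–Stieltjes transform `m_μ(z) = ∫ (x − z)⁻¹ dμ(x)`. -/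
def mTr (μ : Measure ℝ) (z : ℂ) : ℂ := ∫ x, ((x : ℂ) - z)⁻¹ ∂μ

/-- Negative reciprocal Cauchy–Stieltjes transform `F_μ(z) = −1/m_μ(z)`. -/
def FTr (μ : Measure ℝ) (z : ℂ) : ℂ := -(mTr μ z)⁻¹

/-- `I_ν(ω) = ∫ |x − ω|⁻² dν(x)`. -/
def Inu (ν : Measure ℝ) (ω : ℂ) : ℝ := ∫ x, (Complex.normSq ((x : ℂ) - ω))⁻¹ ∂ν

/-- Topological support of a Borel measure on ℝ. -/
def msupport (μ : Measure ℝ) : Set ℝ := {x | ∀ U : Set ℝ, IsOpen U → x ∈ U → 0 < μ U}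

/-- `μh` is a Nevanlinna measure for the (centered) measure `μ`:
a finite Borel measure with `F_μ(ω) − ω = ∫ (x − ω)⁻¹ dμh(x)` on ℂ⁺. -/
def IsNevanlinna (μ μh : Measure ℝ) : Prop :=
  IsFiniteMeasure μh ∧ ∀ ω : ℂ, 0 < ω.im → FTr μ ω - ω = ∫ x, ((x : ℂ) - ω)⁻¹ ∂μh

/-- Subordination function for `μ` at time `t`. -/
structure IsSubordination (μ : Measure ℝ) (t : ℝ) (ω : ℂ → ℂ) : Prop where
  contOn : ContinuousOn ω {z : ℂ | 0 ≤ z.im}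
  mapsTo : ∀ z : ℂ, 0 ≤ z.im → 0 ≤ (ω z).im
  diff : DifferentiableOn ℂ ω {z : ℂ | 0 < z.im}
  im_ge : ∀ z : ℂ, 0 < z.im → z.im ≤ (ω z).im
  subord : ∀ z : ℂ, 0 < z.im → (t : ℂ) * ω z - z = ((t - 1 : ℝ) : ℂ) * FTr μ (ω z)

/-- `ν = μ^{⊞t}`, the free convolution power associated with the subordination function `ω`. -/
def IsFreePower (μ : Measure ℝ) (t : ℝ) (ω : ℂ → ℂ) (ν : Measure ℝ) : Prop :=
  IsProbabilityMeasure ν ∧ ∀ z : ℂ, 0 < z.im → mTr ν z = mTr μ (ω z)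

/-- Subordination functions for the pair `(μa, μb)`. -/
structure IsPairSubordination (μa μb : Measure ℝ) (ωa ωb : ℂ → ℂ) : Prop where
  diff_a : DifferentiableOn ℂ ωa {z : ℂ | 0 < z.im}
  diff_b : DifferentiableOn ℂ ωb {z : ℂ | 0 < z.im}
  im_a : ∀ z : ℂ, 0 < z.im → z.im ≤ (ωa z).im
  im_b : ∀ z : ℂ, 0 < z.im → z.im ≤ (ωb z).im
  lim_a : Tendsto (fun η : ℝ => ωa (η * Complex.I) / (η * Complex.I)) atTop (nhds 1)
  lim_b : Tendsto (fun η : ℝ => ωb (η * Complex.I) / (η * Complex.I)) atTop (nhds 1)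
  eq_a : ∀ z : ℂ, 0 < z.im → ωa z + ωb z - z = FTr μa (ωb z)
  eq_b : ∀ z : ℂ, 0 < z.im → ωa z + ωb z - z = FTr μb (ωa z)

/-- `ν = μa ⊞ μb`, the free additive convolution. -/
def IsFreeConv (μa μb : Measure ℝ) (ωb : ℂ → ℂ) (ν : Measure ℝ) : Prop :=
  IsProbabilityMeasure ν ∧ ∀ z : ℂ, 0 < z.im → mTr ν z = mTr μa (ωb z)

/-- Assumption 1 of the paper: `μ` is a centered, compactly supported probability
measure whose singular part consists of finitely many atoms and whose absolutely
continuous part has a density `ρ` of Jacobi type, supported on finitely many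
disjoint compact intervals with power-law behavior (exponents in `(−1,1)`). -/
structure JacobiData (μ : Measure ℝ) where
  ρ : ℝ → ℝ
  n : ℕ
  npos : 0 < n
  Em : Fin n → ℝ
  Ep : Fin n → ℝ
  βm : Fin n → ℝ
  βp : Fin n → ℝ
  Cj : Fin n → ℝ
  atoms : Finset ℝ
  w : ℝ → ℝ
  prob : IsProbabilityMeasure μ
  compactSupp : ∃ K : Set ℝ, IsCompact K ∧ μ Kᶜ = 0
  centered : ∫ x, x ∂μ = 0
  lt : ∀ j, Em j < Ep j
  disj : ∀ i j, i ≠ j → Disjoint (Set.Icc (Em i) (Ep i)) (Set.Icc (Em j) (Ep j))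
  βm_mem : ∀ j, βm j ∈ Set.Ioo (-1 : ℝ) 1
  βp_mem : ∀ j, βp j ∈ Set.Ioo (-1 : ℝ) 1
  Cj_ge : ∀ j, 1 ≤ Cj j
  ρ_nonneg : ∀ x, 0 ≤ ρ x
  ρ_supp : ∀ x, x ∉ ⋃ j, Set.Icc (Em j) (Ep j) → ρ x = 0
  powerLaw : ∀ j, ∀ᵐ E ∂(volume.restrict (Set.Icc (Em j) (Ep j))),
      (Cj j)⁻¹ * ((E - Em j) ^ (βm j) * (Ep j - E) ^ (βp j)) ≤ ρ E ∧
      ρ E ≤ Cj j * ((E - Em j) ^ (βm j) * (Ep j - E) ^ (βp j))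
  w_nonneg : ∀ a, 0 ≤ w a
  decomp : μ = volume.withDensity (fun x => ENNReal.ofReal (ρ x))
      + ∑ a ∈ atoms, ENNReal.ofReal (w a) • Measure.dirac a

/-- The support of the absolutely continuous part of `μ`. -/
def JacobiData.acSupport {μ : Measure ℝ} (d : JacobiData μ) : Set ℝ :=
  ⋃ j, Set.Icc (d.Em j) (d.Ep j)

/-- The Hölder condition (5.1)/(2.8) of the paper on the density of `μ_ac`. -/
def JacobiData.HolderCond {μ : Measure ℝ} (d : JacobiData μ) : Prop :=
  ∀ j, ∃ L γ : NNReal, 0 < γ ∧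
    HolderOnWith L γ
      (fun E => d.ρ E / ((E - d.Em j) ^ (d.βm j) * (d.Ep j - E) ^ (d.βp j)))
      (Set.Icc (d.Em j) (d.Ep j))

/-- Assumption 2 of the paper: a centered, absolutely continuous probability measure
supported on finitely many disjoint compact intervals, with density of Jacobi type. -/
structure AbsJacobiData (μ : Measure ℝ) where
  ρ : ℝ → ℝ
  n : ℕ
  npos : 0 < n
  Am : Fin n → ℝ
  Ap : Fin n → ℝ
  sm : Fin n → ℝ
  sp : Fin n → ℝ
  Cj : Fin n → ℝ
  prob : IsProbabilityMeasure μ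
  centered : ∫ x, x ∂μ = 0
  lt : ∀ j, Am j < Ap j
  disj : ∀ i j, i ≠ j → Disjoint (Set.Icc (Am i) (Ap i)) (Set.Icc (Am j) (Ap j))
  sm_mem : ∀ j, sm j ∈ Set.Ioo (-1 : ℝ) 1
  sp_mem : ∀ j, sp j ∈ Set.Ioo (-1 : ℝ) 1
  Cj_ge : ∀ j, 1 ≤ Cj j
  ρ_nonneg : ∀ x, 0 ≤ ρ x
  ρ_supp : ∀ x, x ∉ ⋃ j, Set.Icc (Am j) (Ap j) → ρ x = 0
  powerLaw : ∀ j, ∀ᵐ E ∂(volume.restrict (Set.Icc (Am j) (Ap j))),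
      (Cj j)⁻¹ * ((E - Am j) ^ (sm j) * (Ap j - E) ^ (sp j)) ≤ ρ E ∧
      ρ E ≤ Cj j * ((E - Am j) ^ (sm j) * (Ap j - E) ^ (sp j))
  decomp : μ = volume.withDensity (fun x => ENNReal.ofReal (ρ x))
/-!
At a point `z` of the upper half-plane put `u = ω_β(z)`, `v = ω_α(z)` and let `m` be the common
value of the Stieltjes transforms, so that `u + v + 1 / m = z`. Taking imaginary parts gives the
strict inequality `I_α(u) I_β(v) < (I_α(u) + I_β(v)) |m|²`, where `I_μ(w) = ∫ |x - w|⁻² dμ(x)`; in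
other words, the resolvent variances at `u` and `v` have product less than `|m|⁴`. There are two
consequences:

* by Cauchy–Schwarz for resolvents, the subordination equations at `z` determine `m`;
* since `I_μ(w)` dominates `|m_μ(w)|²` near the support of a Jacobi-type density, and `Im m → 0` as
  `z → E₀`, the limit points of `u` and `v` lie off the supports, and at most one is at infinity.

Near such limit points `m_α` and `m_β` have real-analytic local inverses `g_α` and `g_β`, so that
`m` is a branch of the inverse of `Z(m) = g_α(m) + g_β(m) + 1 / m`; uniqueness makes `m` a left
inverse of `Z`, and a continuity argument extends the branch from a sequence to a full half-disc
around `E₀`. In a real coordinate `h`, `Z = E₀ ± h ^ k`. If `k ≥ 4`, or if `k = 3` and the sign is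
`+`, then `Z` takes the same value of positive imaginary part at two points of the upper
half-plane, so it is not injective there; if `k ≤ 2`, the density vanishes on one side of `E₀`.
Hence `Z = E₀ - h ^ 3`, and the density is a cube root up to a real-analytic change of coordinate.
-/

open scoped Real

local notation "ℂ⁺" => UpperHalfPlane.upperHalfPlaneSet

/-! ### Real-analytic germs -/

lemma tendsto_ofReal_nhds (x : ℝ) : Tendsto (fun t : ℝ => (t : ℂ)) (𝓝 x) (𝓝 (x : ℂ)) :=
  continuous_ofReal.tendsto x

lemma tendsto_re_nhds_ofReal (x : ℝ) : Tendsto re (𝓝 (x : ℂ)) (𝓝 x) :=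
  continuous_re.tendsto' _ _ (ofReal_re x)

/-- A germ of analytic function at the real point `x` that takes real values on the real line. -/
structure RealAnalyticAt (f : ℂ → ℂ) (x : ℝ) : Prop where
  analyticAt : AnalyticAt ℂ f x
  im_eq_zero : ∀ᶠ t : ℝ in 𝓝 x, (f t).im = 0

namespace RealAnalyticAt

variable {f g : ℂ → ℂ} {x y a : ℝ}

lemma ofReal_re_eq (hf : RealAnalyticAt f x) : ((f x).re : ℂ) = f x :=
  Complex.ext (by simp) (by simp [hf.im_eq_zero.self_of_nhds])

lemma tendsto_re (hf : RealAnalyticAt f x) :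
    Tendsto (fun t : ℝ => (f t).re) (𝓝 x) (𝓝 (f x).re) :=
  (continuous_re.tendsto _).comp (hf.analyticAt.continuousAt.tendsto.comp (tendsto_ofReal_nhds x))

protected lemma id : RealAnalyticAt (fun m => m) x := ⟨analyticAt_id, by simp⟩

protected lemma const (c : ℝ) : RealAnalyticAt (fun _ => (c : ℂ)) x := ⟨analyticAt_const, by simp⟩

lemma add (hf : RealAnalyticAt f x) (hg : RealAnalyticAt g x) :
    RealAnalyticAt (fun m => f m + g m) x where
  analyticAt := hf.analyticAt.fun_add hg.analyticAt
  im_eq_zero := by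
    filter_upwards [hf.im_eq_zero, hg.im_eq_zero] with t h1 h2
    simp [h1, h2]

lemma sub (hf : RealAnalyticAt f x) (hg : RealAnalyticAt g x) :
    RealAnalyticAt (fun m => f m - g m) x where
  analyticAt := hf.analyticAt.fun_sub hg.analyticAt
  im_eq_zero := by
    filter_upwards [hf.im_eq_zero, hg.im_eq_zero] with t h1 h2
    simp [h1, h2]

lemma mul (hf : RealAnalyticAt f x) (hg : RealAnalyticAt g x) :
    RealAnalyticAt (fun m => f m * g m) x where
  analyticAt := hf.analyticAt.fun_mul hg.analyticAt
  im_eq_zero := by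
    filter_upwards [hf.im_eq_zero, hg.im_eq_zero] with t h1 h2
    simp [h1, h2]

lemma inv (hf : RealAnalyticAt f x) (h0 : f x ≠ 0) : RealAnalyticAt (fun m => (f m)⁻¹) x where
  analyticAt := hf.analyticAt.fun_inv h0
  im_eq_zero := by
    filter_upwards [hf.im_eq_zero] with t h1
    simp [h1]

lemma div (hf : RealAnalyticAt f x) (hg : RealAnalyticAt g x) (h0 : g x ≠ 0) :
    RealAnalyticAt (fun m => f m / g m) x := by
  simpa only [div_eq_mul_inv] using hf.mul (hg.inv h0)

lemma comp (hg : RealAnalyticAt g y) (hf : RealAnalyticAt f x) (hy : f x = y) :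
    RealAnalyticAt (fun m => g (f m)) x where
  analyticAt := (hy ▸ hg.analyticAt : AnalyticAt ℂ g (f x)).fun_comp hf.analyticAt
  im_eq_zero := by
    have hre : (f x).re = y := by rw [hy, ofReal_re]
    filter_upwards [hf.im_eq_zero, (hre ▸ hf.tendsto_re).eventually hg.im_eq_zero] with t h1 h2
    rwa [show f t = ((f t).re : ℂ) from Complex.ext (by simp) (by simp [h1])]

protected lemma exp (hf : RealAnalyticAt f x) : RealAnalyticAt (fun m => Complex.exp (f m)) x where
  analyticAt := hf.analyticAt.cexp'
  im_eq_zero := by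
    filter_upwards [hf.im_eq_zero] with t h1
    simp [exp_im, h1]

protected lemma log (hf : RealAnalyticAt f x) (h0 : 0 < (f x).re) :
    RealAnalyticAt (fun m => Complex.log (f m)) x where
  analyticAt := hf.analyticAt.clog (Or.inl h0)
  im_eq_zero := by
    filter_upwards [hf.im_eq_zero, hf.tendsto_re.eventually (lt_mem_nhds h0)] with t h1 h2
    rw [log_im, arg_eq_zero_iff]
    exact ⟨h2.le, h1⟩

/-- The strict derivative is applied to the pair `m`, `Re m`, where `f (Re m)` is real. -/
lemma abs_im_sub_le (hf : RealAnalyticAt f x) (ha : 0 < a) (hd : HasDerivAt f a x) :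
    ∀ᶠ m in 𝓝 (x : ℂ), |(f m).im - a * m.im| ≤ a / 2 * |m.im| := by
  have hd' : HasStrictDerivAt f a x := hd.deriv ▸ hf.analyticAt.hasStrictDerivAt
  have hT : Tendsto (fun m : ℂ => (m, (m.re : ℂ))) (𝓝 (x : ℂ)) (𝓝 ((x : ℂ), (x : ℂ))) :=
    tendsto_id.prodMk_nhds ((tendsto_ofReal_nhds x).comp (tendsto_re_nhds_ofReal x))
  filter_upwards [hT.eventually (hd'.isLittleO.def (half_pos ha)),
    (tendsto_re_nhds_ofReal x).eventually hf.im_eq_zero] with m hm hre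
  have hsub : m - (m.re : ℂ) = m.im * I := Complex.ext (by simp) (by simp)
  simp only [ContinuousLinearMap.toSpanSingleton_apply, hsub] at hm
  simpa [hre, mul_comm] using (abs_im_le_norm _).trans hm

lemma eventually_im_pos_iff (hf : RealAnalyticAt f x) (ha : 0 < a) (hd : HasDerivAt f a x) :
    ∀ᶠ m in 𝓝 (x : ℂ), 0 < (f m).im ↔ 0 < m.im := by
  filter_upwards [hf.abs_im_sub_le ha hd] with m hm
  constructor <;> intro h
  · by_contra! hle
    rw [abs_of_nonpos hle, abs_le] at hm
    nlinarith [mul_nonpos_of_nonneg_of_nonpos ha.le hle]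
  · rw [abs_of_pos h, abs_le] at hm
    nlinarith [mul_pos ha h]

lemma eventually_im_eq_zero_of_im_eq_zero (hf : RealAnalyticAt f x) (ha : 0 < a)
    (hd : HasDerivAt f a x) : ∀ᶠ m in 𝓝 (x : ℂ), (f m).im = 0 → m.im = 0 := by
  filter_upwards [hf.abs_im_sub_le ha hd] with m hm h
  rw [h, zero_sub, abs_neg, abs_mul, abs_of_pos ha] at hm
  rw [← abs_eq_zero]
  nlinarith [abs_nonneg m.im]

lemma exists_local_inverse (hf : RealAnalyticAt f x) (ha : 0 < a) (hd : HasDerivAt f a x)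
    (hy : f x = y) :
    ∃ g : ℂ → ℂ, RealAnalyticAt g y ∧ g y = x ∧ (∀ᶠ w in 𝓝 (x : ℂ), g (f w) = w) ∧
      ∀ᶠ m in 𝓝 (y : ℂ), f (g m) = m ∧ (0 < (g m).im ↔ 0 < m.im) := by
  have hne : deriv f x ≠ 0 := by rw [hd.deriv]; exact_mod_cast ha.ne'
  have hs := hf.analyticAt.hasStrictDerivAt
  let g := hs.localInverse f (deriv f x) x hne
  have hgan : AnalyticAt ℂ g y := hy ▸ hf.analyticAt.analyticAt_localInverse hne
  have hgx : g y = x := hy ▸ (hs.hasStrictFDerivAt_equiv hne).localInverse_apply_image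
  have hright : ∀ᶠ m in 𝓝 (y : ℂ), f (g m) = m := hy ▸ hs.eventually_right_inverse hne
  have hgt : Tendsto g (𝓝 (y : ℂ)) (𝓝 (x : ℂ)) := by
    simpa only [ContinuousAt, hgx] using hgan.continuousAt
  refine ⟨g, ⟨hgan, ?_⟩, hgx, hs.eventually_left_inverse hne, ?_⟩
  · filter_upwards [(tendsto_ofReal_nhds y).eventually hright, (tendsto_ofReal_nhds y).eventually
      (hgt.eventually (hf.eventually_im_eq_zero_of_im_eq_zero ha hd))] with t h1 h2
    exact h2 (by rw [h1, ofReal_im])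
  · filter_upwards [hright, hgt.eventually (hf.eventually_im_pos_iff ha hd)] with m h1 h2
    exact ⟨h1, by rw [← h2, h1]⟩

lemma exists_eventually_eq_pow_mul (hf : RealAnalyticAt f x)
    (hne : ¬ ∀ᶠ m in 𝓝 (x : ℂ), f m = 0) :
    ∃ (k : ℕ) (g : ℂ → ℂ), RealAnalyticAt g x ∧ g x ≠ 0 ∧
      ∀ᶠ m in 𝓝 (x : ℂ), f m = (m - x) ^ k * g m := by
  obtain ⟨k, g, hg, hgx, hfg⟩ := hf.analyticAt.exists_eventuallyEq_pow_smul_nonzero_iff.mpr hne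
  have hpunct : ∀ᶠ t : ℝ in 𝓝[≠] x, (g t).im = 0 := by
    filter_upwards [hf.im_eq_zero.filter_mono nhdsWithin_le_nhds,
      ((tendsto_ofReal_nhds x).eventually hfg).filter_mono nhdsWithin_le_nhds,
      self_mem_nhdsWithin] with t him heq htx
    have hft : f t = (((t - x) ^ k : ℝ) : ℂ) * g t := by rw [heq]; push_cast; simp
    rw [hft, im_ofReal_mul] at him
    exact (mul_eq_zero.mp him).resolve_left (pow_ne_zero _ (sub_ne_zero.mpr htx))
  have hcont : Tendsto (fun t : ℝ => (g t).im) (𝓝 x) (𝓝 (g x).im) :=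
    (continuous_im.tendsto _).comp (hg.continuousAt.tendsto.comp (tendsto_ofReal_nhds x))
  have hx0 : (g x).im = 0 := tendsto_nhds_unique_of_eventuallyEq
    (hcont.mono_left nhdsWithin_le_nhds) tendsto_const_nhds hpunct
  refine ⟨k, g, ⟨hg, ?_⟩, hgx, by simpa using hfg⟩
  rw [eventually_nhdsWithin_iff] at hpunct
  filter_upwards [hpunct] with t ht
  rcases eq_or_ne t x with rfl | h
  exacts [hx0, ht h]

lemma exists_eventually_pow_eq (hf : RealAnalyticAt f x) (h0 : 0 < (f x).re) {k : ℕ} (hk : k ≠ 0) :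
    ∃ e : ℂ → ℂ, RealAnalyticAt e x ∧ 0 < (e x).re ∧ ∀ᶠ m in 𝓝 (x : ℂ), e m ^ k = f m := by
  have hk' : (k : ℂ) ≠ 0 := Nat.cast_ne_zero.mpr hk
  have hlog : RealAnalyticAt (fun m => log (f m) / (k : ℝ)) x :=
    (hf.log h0).div (.const k) (by exact_mod_cast hk')
  refine ⟨_, hlog.exp, ?_, ?_⟩
  · rw [← hlog.ofReal_re_eq, ← ofReal_exp, ofReal_re]
    positivity
  · have hne : f x ≠ 0 := fun h => by simp [h] at h0
    filter_upwards [hf.analyticAt.continuousAt.eventually_ne hne] with m hm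
    rw [← exp_nat_mul, ofReal_natCast, mul_div_cancel₀ _ hk', exp_log hm]

end RealAnalyticAt

/-- A local analytic coordinate centred at the real point `x`, real on the real line and
increasing there, with derivative `a` at `x`. -/
structure IsRealCoordinate (h : ℂ → ℂ) (x a : ℝ) : Prop where
  realAnalyticAt : RealAnalyticAt h x
  apply_eq_zero : h x = 0
  hasDerivAt : HasDerivAt h a x
  deriv_pos : 0 < a

namespace IsRealCoordinate

variable {h : ℂ → ℂ} {x a : ℝ}

lemma tendsto (hh : IsRealCoordinate h x a) : Tendsto h (𝓝 (x : ℂ)) (𝓝 0) := by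
  simpa only [ContinuousAt, hh.apply_eq_zero] using hh.realAnalyticAt.analyticAt.continuousAt

lemma eventually_im_pos_iff (hh : IsRealCoordinate h x a) :
    ∀ᶠ m in 𝓝 (x : ℂ), 0 < (h m).im ↔ 0 < m.im :=
  hh.realAnalyticAt.eventually_im_pos_iff hh.deriv_pos hh.hasDerivAt

lemma map_nhds_eq (hh : IsRealCoordinate h x a) : map h (𝓝 (x : ℂ)) = 𝓝 0 := by
  have hs := hh.realAnalyticAt.analyticAt.hasStrictDerivAt
  rw [hh.hasDerivAt.deriv] at hs
  rw [hs.map_nhds_eq (by exact_mod_cast hh.deriv_pos.ne'), hh.apply_eq_zero]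

lemma exists_abs_im_sub_le (hh : IsRealCoordinate h x a) :
    ∃ K > 0, ∀ᶠ m in 𝓝 (x : ℂ), |m.im - (h m).im / a| ≤ K * ‖h m‖ ^ 2 := by
  obtain ⟨g, hg, hg0, hgh, -⟩ := hh.realAnalyticAt.exists_local_inverse (y := 0) hh.deriv_pos
    hh.hasDerivAt (by simpa using hh.apply_eq_zero)
  rw [ofReal_zero] at hg0
  have hs := hh.realAnalyticAt.analyticAt.hasStrictDerivAt
  rw [hh.hasDerivAt.deriv] at hs
  have hg1 : deriv g 0 = (a : ℂ)⁻¹ := hh.apply_eq_zero ▸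
    (hs.to_local_left_inverse (by exact_mod_cast hh.deriv_pos.ne') hgh).hasDerivAt.deriv
  obtain ⟨F, hF, hgF⟩ := AnalyticAt.exists_eventuallyEq_sum_add_pow_mul
    (by simpa using hg.analyticAt) 2
  refine ⟨‖F 0‖ + 1, by positivity, ?_⟩
  filter_upwards [hgh, hh.tendsto.eventually hgF, hh.tendsto.eventually
    (hF.continuousAt.norm.eventually_lt continuousAt_const (lt_add_one ‖F 0‖))] with m hm hgm hFm
  have hexp : m = x + (a⁻¹ : ℝ) * h m + h m ^ 2 * F (h m) := by
    rw [hm] at hgm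
    simpa [Finset.sum_range_succ, hg0, hg1, mul_comm] using hgm
  have him : m.im - (h m).im / a = (h m ^ 2 * F (h m)).im := by
    have := congrArg im hexp
    rw [add_im, add_im, ofReal_im, im_ofReal_mul] at this
    linear_combination this
  calc |m.im - (h m).im / a| ≤ ‖h m ^ 2 * F (h m)‖ := him ▸ abs_im_le_norm _
    _ = ‖F (h m)‖ * ‖h m‖ ^ 2 := by rw [norm_mul, norm_pow, mul_comm]
    _ ≤ (‖F 0‖ + 1) * ‖h m‖ ^ 2 := by gcongr

end IsRealCoordinate

lemma RealAnalyticAt.exists_normal_form {f : ℂ → ℂ} {x y : ℝ} (hf : RealAnalyticAt f x)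
    (hy : f x = y) (hne : ¬ ∀ᶠ m in 𝓝 (x : ℂ), f m = y) :
    ∃ (k : ℕ) (σ : ℝ) (h : ℂ → ℂ) (a : ℝ), k ≠ 0 ∧ (σ = 1 ∨ σ = -1) ∧ IsRealCoordinate h x a ∧
      ∀ᶠ m in 𝓝 (x : ℂ), f m = y + σ * h m ^ k := by
  obtain ⟨k, g, hg, hgx, hfg⟩ := (hf.sub (.const y)).exists_eventually_eq_pow_mul
    (by simpa only [sub_eq_zero] using hne)
  have hk : k ≠ 0 := by
    rintro rfl
    exact hgx (by simpa [hy] using hfg.self_of_nhds.symm)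
  have hre : (g x).re ≠ 0 := fun h => hgx (by rw [← hg.ofReal_re_eq, h, ofReal_zero])
  obtain ⟨σ, hσ, hσpos⟩ : ∃ σ : ℝ, (σ = 1 ∨ σ = -1) ∧ 0 < σ * (g x).re := by
    rcases lt_or_gt_of_ne hre with h | h
    · exact ⟨-1, Or.inr rfl, by linarith⟩
    · exact ⟨1, Or.inl rfl, by linarith⟩
  obtain ⟨e, he, hex, hepow⟩ := ((RealAnalyticAt.const σ).mul hg).exists_eventually_pow_eq
    (by rwa [re_ofReal_mul]) hk
  refine ⟨k, σ, fun m => (m - x) * e m, (e x).re, hk, hσ,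
    ⟨(RealAnalyticAt.id.sub (.const x)).mul he, by simp, ?_, hex⟩, ?_⟩
  · simpa [he.ofReal_re_eq] using
      ((hasDerivAt_id (x : ℂ)).sub_const (x : ℂ)).fun_mul he.analyticAt.differentiableAt.hasDerivAt
  · have hσ2 : (σ : ℂ) * σ = 1 := by rcases hσ with h | h <;> simp [h]
    filter_upwards [hfg, hepow] with m h1 h2
    rw [mul_pow, h2]
    linear_combination h1 - (m - x) ^ k * g m * hσ2

/-! ### Inverse branches and cusps -/

lemma nhdsWithin_upperHalfPlaneSet_neBot (x : ℝ) : (𝓝[ℂ⁺] (x : ℂ)).NeBot := by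
  rw [← mem_closure_iff_nhdsWithin_neBot, closure_setOfPred_lt_im]
  simp

lemma tendsto_ofReal_add_mul_I (x : ℝ) :
    Tendsto (fun η : ℝ => (x : ℂ) + η * I) (𝓝[>] 0) (𝓝[ℂ⁺] (x : ℂ)) := by
  refine tendsto_nhdsWithin_iff.mpr ⟨Tendsto.mono_left ?_ nhdsWithin_le_nhds, ?_⟩
  · exact Continuous.tendsto' (by fun_prop) _ _ (by simp)
  · filter_upwards [self_mem_nhdsWithin] with η hη
    simpa using hη

lemma tendsto_ofReal_mul_nhds_zero (p : ℂ) :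
    Tendsto (fun t : ℝ => (t : ℂ) * p) (𝓝[>] 0) (𝓝 0) :=
  (Continuous.tendsto' (by fun_prop) 0 0 (by simp)).mono_left nhdsWithin_le_nhds

/-- The witnesses lie on the unit circle, with arguments differing by `2π / k`. -/
lemma exists_pow_eq_pow_of_le {k : ℕ} {σ : ℝ} (h : (σ = 1 ∧ 3 ≤ k) ∨ (σ = -1 ∧ 4 ≤ k)) :
    ∃ p q : ℂ, p ≠ q ∧ 0 < p.im ∧ 0 < q.im ∧ p ^ k = q ^ k ∧ 0 < ((σ : ℂ) * p ^ k).im := by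
  have hπ := Real.pi_pos
  have hk0 : (0 : ℝ) < k := by
    have : 0 < k := by omega
    exact_mod_cast this
  obtain ⟨c, hc, hck, hσc⟩ : ∃ c : ℝ, 0 < c ∧ c + 2 * π < k * π ∧ 0 < σ * Real.sin c := by
    rcases h with ⟨rfl, hk⟩ | ⟨rfl, hk⟩
    · have : (3 : ℝ) ≤ k := by exact_mod_cast hk
      exact ⟨π / 2, by positivity, by nlinarith, by simp⟩
    · have : (4 : ℝ) ≤ k := by exact_mod_cast hk
      exact ⟨π / 2 + π, by positivity, by nlinarith, by simp [Real.sin_add_pi]⟩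
  have hdiv : (c + 2 * π) / k < π := by rw [div_lt_iff₀ hk0]; linarith
  have hlt : c / k < (c + 2 * π) / k := by gcongr; linarith
  have hpow (θ : ℝ) : exp (((θ / k : ℝ) : ℂ) * I) ^ k = exp (θ * I) := by
    rw [← exp_nat_mul]
    congr 1
    push_cast
    have : (k : ℂ) ≠ 0 := by exact_mod_cast hk0.ne'
    field_simp
  refine ⟨exp (((c / k : ℝ) : ℂ) * I), exp ((((c + 2 * π) / k : ℝ) : ℂ) * I), fun heq => ?_,
    ?_, ?_, ?_, ?_⟩
  · refine hlt.ne (Real.injOn_cos ⟨by positivity, by linarith⟩ ⟨by positivity, hdiv.le⟩ ?_)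
    simpa only [exp_ofReal_mul_I_re] using congrArg re heq
  · rw [exp_ofReal_mul_I_im]
    exact Real.sin_pos_of_pos_of_lt_pi (by positivity) (by linarith)
  · rw [exp_ofReal_mul_I_im]
    exact Real.sin_pos_of_pos_of_lt_pi (by positivity) hdiv
  · rw [hpow, hpow]
    push_cast
    rw [add_mul, exp_add, exp_two_pi_mul_I, mul_one]
  · rwa [hpow, im_ofReal_mul, exp_ofReal_mul_I_im]

lemma im_pow_three (w : ℂ) : (w ^ 3).im = w.im * (3 * w.re ^ 2 - w.im ^ 2) := by
  simp only [pow_succ, pow_zero, one_mul, mul_im, mul_re]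
  ring

/-- The hypotheses place `w` in the sector `π / 3 ≤ arg w ≤ 2π / 3`, where the cube roots of a real
number lie on the two bounding rays. -/
lemma im_and_norm_eq_of_pow_three_eq {w : ℂ} {x : ℝ} (hwx : w ^ 3 = (x : ℂ)) (hw : 0 ≤ w.im)
    (hsector : 3 * w.re ^ 2 ≤ w.im ^ 2) :
    w.im = √3 / 2 * |x| ^ (1 / 3 : ℝ) ∧ ‖w‖ ^ 2 = |x| ^ (2 / 3 : ℝ) := by
  have hnorm : |x| = ‖w‖ ^ 3 := by rw [← norm_pow, hwx, norm_real, Real.norm_eq_abs]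
  have h13 : |x| ^ (1 / 3 : ℝ) = ‖w‖ := by
    rw [hnorm, ← Real.rpow_natCast, ← Real.rpow_mul (norm_nonneg _)]
    norm_num
  have h23 : |x| ^ (2 / 3 : ℝ) = ‖w‖ ^ 2 := by
    rw [hnorm, ← Real.rpow_natCast, ← Real.rpow_mul (norm_nonneg _), ← Real.rpow_natCast]
    norm_num
  have him : w.im * (3 * w.re ^ 2 - w.im ^ 2) = 0 := by rw [← im_pow_three, hwx, ofReal_im]
  have hray : w.im ^ 2 = 3 * w.re ^ 2 := by
    rcases mul_eq_zero.mp him with h | h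
    · rw [h] at hsector ⊢
      nlinarith [sq_nonneg w.re]
    · linarith
  have hsq : ‖w‖ ^ 2 = w.re ^ 2 + w.im ^ 2 := by
    rw [← normSq_eq_norm_sq, normSq_apply]
    ring
  refine ⟨?_, h23.symm⟩
  rw [h13, ← sq_eq_sq₀ hw (by positivity), mul_pow, div_pow, Real.sq_sqrt (by norm_num)]
  linarith

/-- `ρ` has a two-sided cubic-root cusp at `E₀`: the same constant `C` governs both sides, and the
error is of the next order in `|E - E₀| ^ (1 / 3)`. -/
def HasCubicRootCusp (ρ : ℝ → ℝ) (E₀ : ℝ) : Prop :=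
  ∃ C > 0, ∃ K > 0, ∀ᶠ E in 𝓝 E₀,
    |ρ E - C * |E - E₀| ^ (1 / 3 : ℝ)| ≤ K * |E - E₀| ^ (2 / 3 : ℝ)

lemma HasCubicRootCusp.of_const_mul {ρ : ℝ → ℝ} {E₀ c : ℝ} (hc : 0 < c)
    (h : HasCubicRootCusp (fun E => c * ρ E) E₀) : HasCubicRootCusp ρ E₀ := by
  obtain ⟨C, hC, K, hK, h⟩ := h
  refine ⟨C / c, by positivity, K / c, by positivity, h.mono fun E hE => ?_⟩
  have hdiv : ρ E - C / c * |E - E₀| ^ (1 / 3 : ℝ) =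
      (c * ρ E - C * |E - E₀| ^ (1 / 3 : ℝ)) / c := by
    field_simp
  rw [hdiv, abs_div, abs_of_pos hc, div_mul_eq_mul_div]
  gcongr

/-- `n` is a branch on the upper half-plane, near the real point `E₀`, of the inverse of the
real-analytic germ `Z` at `m₀`. -/
structure IsInverseBranch (Z n : ℂ → ℂ) (m₀ E₀ : ℝ) : Prop where
  realAnalyticAt : RealAnalyticAt Z m₀
  tendsto : Tendsto n (𝓝[ℂ⁺] (E₀ : ℂ)) (𝓝 (m₀ : ℂ))
  im_pos : ∀ z : ℂ, 0 < z.im → 0 < (n z).im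
  right_inv : ∀ᶠ z in 𝓝[ℂ⁺] (E₀ : ℂ), Z (n z) = z
  left_inv : ∀ᶠ m in 𝓝 (m₀ : ℂ), 0 < m.im → 0 < (Z m).im → n (Z m) = m

namespace IsInverseBranch

variable {Z n h : ℂ → ℂ} {m₀ E₀ σ a : ℝ} {k : ℕ} {b : ℝ → ℝ}

lemma apply_eq (hb : IsInverseBranch Z n m₀ E₀) : Z m₀ = E₀ := by
  have := nhdsWithin_upperHalfPlaneSet_neBot E₀
  exact tendsto_nhds_unique_of_eventuallyEq
    (hb.realAnalyticAt.analyticAt.continuousAt.tendsto.comp hb.tendsto)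
    (tendsto_id.mono_left nhdsWithin_le_nhds) hb.right_inv

lemma not_eventually_eq (hb : IsInverseBranch Z n m₀ E₀) :
    ¬ ∀ᶠ m in 𝓝 (m₀ : ℂ), Z m = E₀ := by
  intro hconst
  have := nhdsWithin_upperHalfPlaneSet_neBot E₀
  obtain ⟨z, hz, hzE, hzpos⟩ :=
    (hb.right_inv.and ((hb.tendsto.eventually hconst).and self_mem_nhdsWithin)).exists
  rw [← hz, hzE] at hzpos
  simp at hzpos

lemma exponent_le (hb : IsInverseBranch Z n m₀ E₀) (hh : IsRealCoordinate h m₀ a)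
    (hZ : ∀ᶠ m in 𝓝 (m₀ : ℂ), Z m = E₀ + σ * h m ^ k) :
    (σ = 1 → k ≤ 2) ∧ (σ = -1 → k ≤ 3) := by
  suffices hσk : ¬ ((σ = 1 ∧ 3 ≤ k) ∨ (σ = -1 ∧ 4 ≤ k)) by grind
  intro hσk
  obtain ⟨p, q, hpq, hp, hq, hpow, him⟩ := exists_pow_eq_pow_of_le hσk
  have hpre : ∀ᶠ w in 𝓝 (0 : ℂ), 0 < w.im → 0 < ((σ : ℂ) * w ^ k).im →
      h (n (E₀ + σ * w ^ k)) = w := by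
    rw [← hh.map_nhds_eq, eventually_map]
    filter_upwards [hb.left_inv, hZ, hh.eventually_im_pos_iff] with m hleft hZm hpos hw hσw
    rw [← hZm, hleft (hpos.mp hw) (by rw [hZm]; simpa using hσw)]
  obtain ⟨t, htp, htq, ht⟩ := (((tendsto_ofReal_mul_nhds_zero p).eventually hpre).and
    (((tendsto_ofReal_mul_nhds_zero q).eventually hpre).and self_mem_nhdsWithin)).exists
  replace ht : 0 < t := ht
  have hscale (w : ℂ) : (σ : ℂ) * (t * w) ^ k = ((t ^ k : ℝ) : ℂ) * (σ * w ^ k) := by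
    push_cast
    ring
  have hpos : 0 < ((σ : ℂ) * (t * p) ^ k).im := by
    rw [hscale, im_ofReal_mul]
    positivity
  have hp' := htp (by rw [im_ofReal_mul]; positivity) hpos
  have hq' := htq (by rw [im_ofReal_mul]; positivity) (by rwa [hscale, ← hpow, ← hscale])
  rw [hscale, ← hpow, ← hscale, hp'] at hq'
  exact hpq (mul_left_cancel₀ (by exact_mod_cast ht.ne') hq')

lemma eventually_exists_boundary_value (hb : IsInverseBranch Z n m₀ E₀)
    (hn : ∀ E : ℝ, Tendsto (fun η : ℝ => (n (E + η * I)).im) (𝓝[>] 0) (𝓝 (b E)))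
    {U : Set ℂ} (hU : U ∈ 𝓝 (m₀ : ℂ)) :
    ∀ᶠ E : ℝ in 𝓝 E₀, ∃ m ∈ U, Z m = E ∧ m.im = b E ∧
      m ∈ closure {w ∈ U | 0 < w.im ∧ 0 < (Z w).im} := by
  have hZcont : ∀ᶠ m in 𝓝 (m₀ : ℂ), ContinuousAt Z m :=
    hb.realAnalyticAt.analyticAt.eventually_analyticAt.mono fun _ h => h.continuousAt
  obtain ⟨r, hr, hball⟩ := Metric.nhds_basis_closedBall.mem_iff.mp (inter_mem hU hZcont)
  have hnear := eventually_eventually_nhds.mpr <| eventually_nhdsWithin_iff.mp <|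
    (hb.tendsto.eventually (Metric.closedBall_mem_nhds _ hr)).and hb.right_inv
  filter_upwards [(tendsto_ofReal_nhds E₀).eventually hnear] with E hE
  let 𝒰 := Ultrafilter.of (𝓝[>] (0 : ℝ))
  have h𝒰 : (𝒰 : Filter ℝ) ≤ 𝓝[>] 0 := Ultrafilter.of_le _
  have hvert : Tendsto (fun η : ℝ => (E : ℂ) + η * I) 𝒰 (𝓝[ℂ⁺] (E : ℂ)) :=
    (tendsto_ofReal_add_mul_I E).mono_left h𝒰
  have hgood : ∀ᶠ η : ℝ in 𝒰, n (E + η * I) ∈ Metric.closedBall (m₀ : ℂ) r ∧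
      Z (n (E + η * I)) = E + η * I := hvert.eventually (eventually_nhdsWithin_iff.mpr hE)
  have hpos : ∀ᶠ η : ℝ in 𝒰, 0 < ((E : ℂ) + η * I).im := hvert.eventually self_mem_nhdsWithin
  obtain ⟨m, hm, hlim⟩ := (isCompact_closedBall (m₀ : ℂ) r).ultrafilter_le_nhds'
    (𝒰.map fun η => n (E + η * I)) (hgood.mono fun _ h => h.1)
  replace hlim : Tendsto (fun η : ℝ => n (E + η * I)) 𝒰 (𝓝 m) := hlim
  refine ⟨m, (hball hm).1, ?_, ?_, ?_⟩
  · exact tendsto_nhds_unique_of_eventuallyEq ((hball hm).2.tendsto.comp hlim)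
      (hvert.mono_right nhdsWithin_le_nhds) (hgood.mono fun _ h => h.2)
  · exact tendsto_nhds_unique ((continuous_im.tendsto m).comp hlim) ((hn E).mono_left h𝒰)
  · refine mem_closure_of_tendsto hlim ?_
    filter_upwards [hgood, hpos] with η hη him
    exact ⟨(hball hη.1).1, hb.im_pos _ him, by rwa [hη.2]⟩

/-- For `k ≤ 2`, a solution of `w ^ k = σ (E - E₀) > 0` is real. -/
lemma eventually_boundary_value_eq_zero (hb : IsInverseBranch Z n m₀ E₀)
    (hn : ∀ E : ℝ, Tendsto (fun η : ℝ => (n (E + η * I)).im) (𝓝[>] 0) (𝓝 (b E)))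
    (hh : IsRealCoordinate h m₀ a) (hk0 : k ≠ 0) (hk : k ≤ 2) (hσ : σ = 1 ∨ σ = -1)
    (hZ : ∀ᶠ m in 𝓝 (m₀ : ℂ), Z m = E₀ + σ * h m ^ k) :
    ∀ᶠ E in 𝓝 E₀, 0 < σ * (E - E₀) → b E = 0 := by
  have hreal := hh.realAnalyticAt.eventually_im_eq_zero_of_im_eq_zero hh.deriv_pos hh.hasDerivAt
  filter_upwards [hb.eventually_exists_boundary_value hn (hZ.and hreal)]
    with E ⟨m, ⟨hZm, hrealm⟩, hmE, him, _⟩ hpos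
  rw [← him]
  refine hrealm ?_
  have hσ2 : (σ : ℂ) * σ = 1 := by rcases hσ with h | h <;> simp [h]
  have hpow : h m ^ k = ((σ * (E - E₀) : ℝ) : ℂ) := by
    push_cast
    linear_combination σ * (hmE.symm.trans hZm).symm - h m ^ k * hσ2
  interval_cases k
  · exact absurd rfl hk0
  · rw [← pow_one (h m), hpow, ofReal_im]
  · have hre := congrArg re hpow
    have him' := congrArg im hpow
    simp only [sq, mul_re, mul_im, ofReal_re, ofReal_im] at hre him'
    by_contra hne
    have hre0 : (h m).re = 0 :=
      (mul_eq_zero.mp (by linarith : (h m).im * (h m).re = 0)).resolve_left hne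
    rw [hre0] at hre
    nlinarith [mul_self_nonneg (h m).im]

lemma hasCubicRootCusp_of_normal_form (hb : IsInverseBranch Z n m₀ E₀)
    (hn : ∀ E : ℝ, Tendsto (fun η : ℝ => (n (E + η * I)).im) (𝓝[>] 0) (𝓝 (b E)))
    (hh : IsRealCoordinate h m₀ a) (hZ : ∀ᶠ m in 𝓝 (m₀ : ℂ), Z m = E₀ - h m ^ 3) :
    HasCubicRootCusp b E₀ := by
  have ha := hh.deriv_pos
  obtain ⟨K, hK, hest⟩ := hh.exists_abs_im_sub_le
  have hhcont := hh.realAnalyticAt.analyticAt.eventually_analyticAt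
  refine ⟨√3 / 2 / a, by positivity, K, hK, ?_⟩
  filter_upwards [hb.eventually_exists_boundary_value hn
    (hZ.and (hest.and (hhcont.and hh.eventually_im_pos_iff)))]
    with E ⟨m, ⟨hZm, hestm, hanm, _⟩, hmE, him, hcl⟩
  have hclosed : h m ∈ {w : ℂ | 0 ≤ w.im ∧ 3 * w.re ^ 2 ≤ w.im ^ 2} := by
    refine closure_minimal ?_ ?_ (mem_closure_image hanm.continuousAt hcl)
    · rintro - ⟨w, ⟨⟨hZw, -, -, hposw⟩, hw, hZpos⟩, rfl⟩
      have hhw : 0 < (h w).im := hposw.mpr hw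
      rw [hZw, sub_im, ofReal_im, im_pow_three] at hZpos
      exact ⟨hhw.le, by nlinarith⟩
    · exact (isClosed_le continuous_const continuous_im).inter
        (isClosed_le ((continuous_re.pow 2).const_mul 3) (continuous_im.pow 2))
  have hcube : h m ^ 3 = ((E₀ - E : ℝ) : ℂ) := by
    push_cast
    linear_combination hmE.symm.trans hZm
  obtain ⟨himh, hnormh⟩ := im_and_norm_eq_of_pow_three_eq hcube hclosed.1 hclosed.2
  rw [abs_sub_comm] at himh hnormh
  rw [← him, ← hnormh, show √3 / 2 / a * |E - E₀| ^ (1 / 3 : ℝ) = (h m).im / a by rw [himh]; ring]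
  exact hestm

theorem hasCubicRootCusp (hb : IsInverseBranch Z n m₀ E₀)
    (hn : ∀ E : ℝ, Tendsto (fun η : ℝ => (n (E + η * I)).im) (𝓝[>] 0) (𝓝 (b E)))
    (hright : ∃ᶠ E in 𝓝[>] E₀, b E ≠ 0) (hleft : ∃ᶠ E in 𝓝[<] E₀, b E ≠ 0) :
    HasCubicRootCusp b E₀ := by
  obtain ⟨k, σ, h, a, hk0, hσ, hh, hZ⟩ :=
    hb.realAnalyticAt.exists_normal_form hb.apply_eq hb.not_eventually_eq
  have hk2 : 2 < k := by
    by_contra! hk2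
    have hzero := hb.eventually_boundary_value_eq_zero hn hh hk0 hk2 hσ hZ
    rcases hσ with rfl | rfl
    · obtain ⟨E, hE, hEz, hpos⟩ := (hright.and_eventually
        ((hzero.filter_mono nhdsWithin_le_nhds).and self_mem_nhdsWithin)).exists
      exact hE (hEz (by linarith [hpos]))
    · obtain ⟨E, hE, hEz, hneg⟩ := (hleft.and_eventually
        ((hzero.filter_mono nhdsWithin_le_nhds).and self_mem_nhdsWithin)).exists
      exact hE (hEz (by linarith [hneg]))
  have hle := hb.exponent_le hh hZ
  obtain ⟨rfl, rfl⟩ : k = 3 ∧ σ = -1 := by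
    rcases hσ with rfl | rfl <;> grind
  exact hb.hasCubicRootCusp_of_normal_form hn hh (by simpa [sub_eq_add_neg] using hZ)

end IsInverseBranch

/-! ### Second moments of complex random variables -/

section SecondMoments

variable {Ω : Type*} [MeasurableSpace Ω] {P : Measure Ω} {f g : Ω → ℂ}

lemma norm_integral_mul_sq_le (hf : MemLp f 2 P) (hg : MemLp g 2 P) :
    ‖∫ x, f x * g x ∂P‖ ^ 2 ≤ (∫ x, ‖f x‖ ^ 2 ∂P) * ∫ x, ‖g x‖ ^ 2 ∂P := by
  have hf' : MemLp f (ENNReal.ofReal 2) P := by simpa using hf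
  have hg' : MemLp g (ENNReal.ofReal 2) P := by simpa using hg
  have hölder := integral_mul_norm_le_Lp_mul_Lq Real.HolderConjugate.two_two hf' hg'
  simp only [Real.rpow_ofNat, ← Real.sqrt_eq_rpow] at hölder
  calc ‖∫ x, f x * g x ∂P‖ ^ 2
      ≤ (√(∫ x, ‖f x‖ ^ 2 ∂P) * √(∫ x, ‖g x‖ ^ 2 ∂P)) ^ 2 := by
        gcongr
        exact (norm_integral_le_integral_norm _).trans (by simpa only [norm_mul] using hölder)
    _ = (∫ x, ‖f x‖ ^ 2 ∂P) * ∫ x, ‖g x‖ ^ 2 ∂P := by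
        rw [mul_pow, Real.sq_sqrt (integral_nonneg fun _ => sq_nonneg _),
          Real.sq_sqrt (integral_nonneg fun _ => sq_nonneg _)]

variable [IsProbabilityMeasure P]

lemma integral_sub_mean_mul_sub_mean (hf : MemLp f 2 P) (hg : MemLp g 2 P) :
    ∫ x, (f x - ∫ y, f y ∂P) * (g x - ∫ y, g y ∂P) ∂P
      = ∫ x, f x * g x ∂P - (∫ x, f x ∂P) * ∫ x, g x ∂P := by
  set a := ∫ x, f x ∂P with ha
  set b := ∫ x, g x ∂P with hb
  have hfg : Integrable (fun x => f x * g x) P := hf.integrable_mul hg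
  have hfb : Integrable (fun x => f x * b) P := (hf.integrable (by norm_num)).mul_const b
  have hsub : Integrable (fun x => f x * g x - f x * b) P := hfg.sub hfb
  have hag : Integrable (fun x => a * (g x - b)) P :=
    ((hg.integrable (by norm_num)).sub (integrable_const b)).const_mul a
  calc ∫ x, (f x - a) * (g x - b) ∂P
      = ∫ x, (f x * g x - f x * b - a * (g x - b)) ∂P := by congr with x; ring
    _ = ∫ x, f x * g x ∂P - a * b - a * (b - b) := by
        rw [integral_sub hsub hag, integral_sub hfg hfb, integral_mul_const,
          integral_const_mul, integral_sub (hg.integrable (by norm_num)) (integrable_const b)]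
        simp [ha, hb]
    _ = ∫ x, f x * g x ∂P - a * b := by ring

lemma integral_norm_sub_mean_sq (hf : MemLp f 2 P) :
    ∫ x, ‖f x - ∫ y, f y ∂P‖ ^ 2 ∂P = ∫ x, ‖f x‖ ^ 2 ∂P - ‖∫ x, f x ∂P‖ ^ 2 := by
  have hconj := integral_sub_mean_mul_sub_mean hf hf.star
  simp only [Pi.star_apply, RCLike.star_def, integral_conj, ← map_sub, Complex.mul_conj,
    Complex.normSq_eq_norm_sq] at hconj
  rw [integral_complex_ofReal, integral_complex_ofReal] at hconj
  exact_mod_cast hconj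

end SecondMoments

lemma variance_id_mul_norm_sq_le_integral {μ : Measure ℝ} [IsProbabilityMeasure μ]
    (hμ : MemLp id 2 μ) (a m : ℂ) :
    ‖m‖ ^ 2 * ProbabilityTheory.variance id μ ≤ ∫ x : ℝ, ‖a - m * x‖ ^ 2 ∂μ := by
  rcases eq_or_ne m 0 with rfl | hm
  · simp
  have hsub (c : ℝ) : MemLp (fun x : ℝ => x - c) 2 μ := hμ.sub (memLp_const c)
  have hint : Integrable (fun x : ℝ => ‖a - m * x‖ ^ 2) μ :=
    ((memLp_const a).sub (hμ.ofReal.const_mul m)).integrable_norm_pow (by norm_num)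
  have hpoint (x : ℝ) : ‖m‖ ^ 2 * (x - (a / m).re) ^ 2 ≤ ‖a - m * x‖ ^ 2 := by
    have hfactor : a - m * x = m * (a / m - x) := by field_simp
    rw [hfactor, norm_mul, mul_pow, ← sq_abs (x - _), abs_sub_comm]
    gcongr
    simpa using Complex.abs_re_le_norm (a / m - x)
  calc ‖m‖ ^ 2 * ProbabilityTheory.variance id μ
      = ‖m‖ ^ 2 * ProbabilityTheory.variance (fun x : ℝ => x - (a / m).re) μ := by
        rw [ProbabilityTheory.variance_sub_const (X := fun x : ℝ => x)
          measurable_id.aestronglyMeasurable]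
        rfl
    _ ≤ ‖m‖ ^ 2 * ∫ x : ℝ, (x - (a / m).re) ^ 2 ∂μ := by
        gcongr
        exact ProbabilityTheory.variance_le_expectation_sq (hsub _).aestronglyMeasurable
    _ = ∫ x : ℝ, ‖m‖ ^ 2 * (x - (a / m).re) ^ 2 ∂μ := (integral_const_mul _ _).symm
    _ ≤ ∫ x : ℝ, ‖a - m * x‖ ^ 2 ∂μ :=
        integral_mono ((hsub _).integrable_sq.const_mul _) hint hpoint

lemma variance_id_pos {μ : Measure ℝ} [IsProbabilityMeasure μ] [NullSingletonClass μ]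
    (hμ : MemLp id 2 μ) : 0 < ProbabilityTheory.variance id μ := by
  refine (ProbabilityTheory.variance_nonneg _ _).lt_of_ne' fun h0 => ?_
  have hae := ProbabilityTheory.ae_eq_integral_of_variance_eq_zero hμ h0
  have hne : ∀ᵐ x ∂μ, x ≠ ∫ y, id y ∂μ := Measure.ae_ne _ _
  obtain ⟨x, hx, hx'⟩ := (hae.and hne).exists
  exact hx' hx

/-! ### The Stieltjes transform off the support -/

/-- The complement in `ℂ` of the support of a measure on `ℝ`; the Stieltjes transform is analytic
there. -/
def offSupport (μ : Measure ℝ) : Set ℂ := {z | ∀ x ∈ μ.support, (x : ℂ) ≠ z}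

section OffSupport

variable {μ : Measure ℝ} {z w : ℂ}

lemma mem_offSupport_of_im_pos (hz : 0 < z.im) : z ∈ offSupport μ := by
  rintro x - rfl
  exact hz.ne' (ofReal_im x)

lemma ofReal_mem_offSupport {u : ℝ} : (u : ℂ) ∈ offSupport μ ↔ u ∉ μ.support := by
  simp only [offSupport, mem_ofPred_eq, ne_eq, ofReal_inj]
  exact ⟨fun h hu => h u hu rfl, fun hu x hx hxu => hu (hxu ▸ hx)⟩

lemma isOpen_offSupport : IsOpen (offSupport μ) := by
  have hcompl : offSupport μ = (((↑) : ℝ → ℂ) '' μ.support)ᶜ := by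
    ext z
    simp [offSupport]
  rw [hcompl, isOpen_compl_iff]
  exact Complex.isometry_ofReal.isClosedEmbedding.isClosedMap _ Measure.isClosed_support

lemma exists_forall_le_norm_sub (hz : z ∈ offSupport μ) :
    ∃ ε > 0, ∀ x ∈ μ.support, ∀ w ∈ Metric.ball z ε, ε ≤ ‖(x : ℂ) - w‖ := by
  obtain ⟨r, hr, hball⟩ := Metric.isOpen_iff.mp isOpen_offSupport z hz
  refine ⟨r / 2, half_pos hr, fun x hx w hw => ?_⟩
  by_contra! hlt
  have hxz : dist (x : ℂ) z < r := by
    rw [← dist_eq_norm] at hlt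
    linarith [dist_triangle (x : ℂ) w z, Metric.mem_ball.mp hw]
  exact hball hxz x hx rfl

lemma sub_ne_zero_of_mem_offSupport (hz : z ∈ offSupport μ) {x : ℝ} (hx : x ∈ μ.support) :
    (x : ℂ) - z ≠ 0 := sub_ne_zero.mpr (hz x hx)

lemma exists_forall_abs_le (hμ : IsCompact μ.support) : ∃ L > 0, ∀ x ∈ μ.support, |x| ≤ L := by
  obtain ⟨L, hL⟩ := hμ.isBounded.exists_norm_le
  exact ⟨max L 1, by positivity, fun x hx => (hL x hx).trans (le_max_left _ _)⟩

lemma norm_sub_le_of_mem_support {L : ℝ} (hL : ∀ x ∈ μ.support, |x| ≤ L) {x : ℝ}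
    (hx : x ∈ μ.support) :
    ‖(x : ℂ) - z‖ ≤ L + ‖z‖ := by
  refine (norm_sub_le _ _).trans ?_
  rw [Complex.norm_real, Real.norm_eq_abs]
  gcongr
  exact hL x hx

lemma Inu_eq_integral_norm_sq (μ : Measure ℝ) (z : ℂ) :
    Inu μ z = ∫ x : ℝ, ‖((x : ℂ) - z)⁻¹‖ ^ 2 ∂μ := by
  simp only [Inu, Complex.normSq_eq_norm_sq, norm_inv, inv_pow]

/-- The variance of the resolvent `x ↦ (x - z)⁻¹` under `μ`. -/
def resolventVariance (μ : Measure ℝ) (z : ℂ) : ℝ := ∫ x : ℝ, ‖((x : ℂ) - z)⁻¹ - mTr μ z‖ ^ 2 ∂μ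

/-- The integral of the product of two resolvents. Up to the factor `z - w` it is the difference
of the values of `mTr μ`, see `mTr_sub_mTr`. -/
def resolventPairing (μ : Measure ℝ) (z w : ℂ) : ℂ :=
  ∫ x : ℝ, ((x : ℂ) - z)⁻¹ * ((x : ℂ) - w)⁻¹ ∂μ

section FiniteMeasure

variable [IsFiniteMeasure μ]

lemma memLp_resolvent (hz : z ∈ offSupport μ) (p : ENNReal) :
    MemLp (fun x : ℝ => ((x : ℂ) - z)⁻¹) p μ := by
  obtain ⟨ε, hε, hdist⟩ := exists_forall_le_norm_sub hz
  have hbound : ∀ᵐ x : ℝ ∂μ, ‖((x : ℂ) - z)⁻¹‖ ≤ ε⁻¹ := by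
    filter_upwards [Measure.support_mem_ae] with x hx
    rw [norm_inv]
    exact inv_anti₀ hε (hdist x hx z (Metric.mem_ball_self hε))
  exact MemLp.of_bound (by fun_prop) ε⁻¹ hbound

lemma integrable_resolvent (hz : z ∈ offSupport μ) :
    Integrable (fun x : ℝ => ((x : ℂ) - z)⁻¹) μ :=
  (memLp_resolvent hz 1).integrable le_rfl

lemma integrable_norm_resolvent_sq (hz : z ∈ offSupport μ) :
    Integrable (fun x : ℝ => ‖((x : ℂ) - z)⁻¹‖ ^ 2) μ :=
  (memLp_resolvent hz 2).integrable_norm_pow (by norm_num)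

lemma mTr_im (hz : z ∈ offSupport μ) : (mTr μ z).im = z.im * Inu μ z := by
  have him : ∫ x : ℝ, (((x : ℂ) - z)⁻¹).im ∂μ = (mTr μ z).im :=
    integral_im (𝕜 := ℂ) (integrable_resolvent hz)
  rw [← him, Inu, ← integral_const_mul]
  congr 1 with x
  simp [Complex.inv_im, div_eq_mul_inv]

lemma mTr_sub_mTr (hz : z ∈ offSupport μ) (hw : w ∈ offSupport μ) :
    mTr μ z - mTr μ w = (z - w) * resolventPairing μ z w := by
  rw [mTr, mTr, resolventPairing, ← integral_sub (integrable_resolvent hz)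
    (integrable_resolvent hw), ← integral_const_mul]
  refine integral_congr_ae ?_
  filter_upwards [Measure.support_mem_ae] with x hx
  have hxz := sub_ne_zero_of_mem_offSupport hz hx
  have hxw := sub_ne_zero_of_mem_offSupport hw hx
  field_simp
  ring

lemma hasDerivAt_mTr (hz : z ∈ offSupport μ) :
    HasDerivAt (mTr μ) (∫ x : ℝ, (((x : ℂ) - z) ^ 2)⁻¹ ∂μ) z := by
  obtain ⟨ε, hε, hdist⟩ := exists_forall_le_norm_sub hz
  refine (hasDerivAt_integral_of_dominated_loc_of_deriv_le
    (F := fun (w : ℂ) (x : ℝ) => ((x : ℂ) - w)⁻¹) (F' := fun w x => (((x : ℂ) - w) ^ 2)⁻¹)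
    (bound := fun _ => (ε ^ 2)⁻¹) (Metric.ball_mem_nhds z hε)
    (Eventually.of_forall fun w => by fun_prop) (integrable_resolvent hz)
    (by fun_prop) ?_ (integrable_const _) ?_).2
  · filter_upwards [Measure.support_mem_ae] with x hx w hw
    rw [norm_inv, norm_pow]
    gcongr
    exact hdist x hx w hw
  · filter_upwards [Measure.support_mem_ae] with x hx w hw
    have hne : (x : ℂ) - w ≠ 0 := norm_pos_iff.mp (hε.trans_le (hdist x hx w hw))
    simpa [div_eq_mul_inv] using ((hasDerivAt_id w).const_sub (x : ℂ)).fun_inv hne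

lemma analyticAt_mTr (hz : z ∈ offSupport μ) : AnalyticAt ℂ (mTr μ) z :=
  DifferentiableOn.analyticAt (s := offSupport μ)
    (fun _ hw => (hasDerivAt_mTr hw).differentiableAt.differentiableWithinAt)
    (isOpen_offSupport.mem_nhds hz)

lemma hasDerivAt_mTr_ofReal {u : ℝ} (hu : u ∉ μ.support) :
    HasDerivAt (mTr μ) (Inu μ u : ℂ) (u : ℂ) := by
  convert hasDerivAt_mTr (ofReal_mem_offSupport.mpr hu) using 1
  rw [Inu, ← integral_complex_ofReal]
  congr 1 with x
  rw [← Complex.ofReal_sub, Complex.normSq_ofReal]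
  push_cast
  ring

lemma realAnalyticAt_mTr {u : ℝ} (hu : u ∉ μ.support) : RealAnalyticAt (mTr μ) u where
  analyticAt := analyticAt_mTr (ofReal_mem_offSupport.mpr hu)
  im_eq_zero := by
    filter_upwards [isOpen_offSupport.preimage continuous_ofReal |>.mem_nhds
      (ofReal_mem_offSupport.mpr hu)] with x hx
    simp [mTr_im hx]

end FiniteMeasure

section ProbabilityMeasure

variable [IsProbabilityMeasure μ] {L : ℝ}

lemma resolventVariance_eq_sub (hz : z ∈ offSupport μ) :
    resolventVariance μ z = Inu μ z - ‖mTr μ z‖ ^ 2 := by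
  rw [Inu_eq_integral_norm_sq]
  exact integral_norm_sub_mean_sq (memLp_resolvent hz 2)

lemma norm_resolventPairing_sub_sq_le (hz : z ∈ offSupport μ) (hw : w ∈ offSupport μ) :
    ‖resolventPairing μ z w - mTr μ z * mTr μ w‖ ^ 2
      ≤ resolventVariance μ z * resolventVariance μ w := by
  have hz2 := memLp_resolvent hz 2
  have hw2 := memLp_resolvent hw 2
  calc ‖resolventPairing μ z w - mTr μ z * mTr μ w‖ ^ 2
      = ‖∫ x : ℝ, (((x : ℂ) - z)⁻¹ - mTr μ z) * (((x : ℂ) - w)⁻¹ - mTr μ w) ∂μ‖ ^ 2 :=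
        congrArg (‖·‖ ^ 2) (integral_sub_mean_mul_sub_mean hz2 hw2).symm
    _ ≤ resolventVariance μ z * resolventVariance μ w :=
        norm_integral_mul_sq_le (hz2.sub (memLp_const _)) (hw2.sub (memLp_const _))

lemma Inu_pos (hz : z ∈ offSupport μ) : 0 < Inu μ z := by
  rw [Inu_eq_integral_norm_sq, integral_pos_iff_support_of_nonneg (fun _ => sq_nonneg _)
    (integrable_norm_resolvent_sq hz)]
  refine lt_of_lt_of_le (by simp) (measure_mono_ae (s := Set.univ) ?_)
  filter_upwards [Measure.support_mem_ae] with x hx _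
  exact pow_ne_zero 2 (norm_ne_zero_iff.mpr (inv_ne_zero (sub_ne_zero_of_mem_offSupport hz hx)))

lemma mTr_im_pos (hz : 0 < z.im) : 0 < (mTr μ z).im := by
  rw [mTr_im (mem_offSupport_of_im_pos hz)]
  exact mul_pos hz (Inu_pos (mem_offSupport_of_im_pos hz))

lemma mTr_ne_zero (hz : 0 < z.im) : mTr μ z ≠ 0 := fun h0 => by
  simpa [h0] using mTr_im_pos (μ := μ) hz

lemma memLp_id_of_abs_le (hL : ∀ x ∈ μ.support, |x| ≤ L) : MemLp id 2 μ :=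
  MemLp.of_bound measurable_id.aestronglyMeasurable L <| by
    filter_upwards [Measure.support_mem_ae] with x hx using hL x hx

lemma norm_sq_mul_variance_le_resolventVariance (hL : ∀ x ∈ μ.support, |x| ≤ L)
    (hz : z ∈ offSupport μ) :
    ‖mTr μ z‖ ^ 2 * ProbabilityTheory.variance id μ / (L + ‖z‖) ^ 2 ≤ resolventVariance μ z := by
  set m := mTr μ z
  have hid := memLp_id_of_abs_le hL
  have hint : Integrable (fun x : ℝ => ‖1 + m * z - m * x‖ ^ 2) μ :=
    ((memLp_const _).sub (hid.ofReal.const_mul m)).integrable_norm_pow (by norm_num)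
  have hvar : Integrable (fun x : ℝ => ‖((x : ℂ) - z)⁻¹ - m‖ ^ 2) μ :=
    ((memLp_resolvent hz 2).sub (memLp_const m)).integrable_norm_pow (by norm_num)
  calc ‖m‖ ^ 2 * ProbabilityTheory.variance id μ / (L + ‖z‖) ^ 2
      ≤ (∫ x : ℝ, ‖1 + m * z - m * x‖ ^ 2 ∂μ) / (L + ‖z‖) ^ 2 := by
        gcongr
        exact variance_id_mul_norm_sq_le_integral hid _ _
    _ = ∫ x : ℝ, ‖1 + m * z - m * x‖ ^ 2 / (L + ‖z‖) ^ 2 ∂μ := (integral_div _ _).symm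
    _ ≤ resolventVariance μ z := by
        refine integral_mono_ae (hint.div_const _) hvar ?_
        filter_upwards [Measure.support_mem_ae] with x hx
        have hne := sub_ne_zero_of_mem_offSupport hz hx
        have hpos : 0 < ‖(x : ℂ) - z‖ := norm_pos_iff.mpr hne
        have hquot : ((x : ℂ) - z)⁻¹ - m = (1 + m * z - m * x) / ((x : ℂ) - z) := by
          field_simp
          ring
        rw [hquot, norm_div, div_pow]
        gcongr
        exact norm_sub_le_of_mem_support hL hx

end ProbabilityMeasure

end OffSupport

/-! ### The Stieltjes transform near the support -/

lemma exists_measureReal_closedBall_le {X : Type*} [MetricSpace X] [MeasurableSpace X]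
    [OpensMeasurableSpace X] (μ : Measure X) [IsFiniteMeasure μ] [NullSingletonClass μ] (u : X)
    {c : ℝ} (hc : 0 < c) : ∃ r > 0, μ.real (Metric.closedBall u r) ≤ c := by
  have hlim : Tendsto (fun r => μ (Metric.cthickening r {u})) (𝓝 0) (𝓝 (μ {u})) :=
    tendsto_measure_cthickening_of_isClosed ⟨1, one_pos, measure_ne_top μ _⟩ isClosed_singleton
  rw [measure_singleton] at hlim
  have hsmall := hlim.eventually (gt_mem_nhds (ENNReal.ofReal_pos.mpr hc))
  obtain ⟨r, hr, hr0⟩ :=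
    ((hsmall.filter_mono nhdsWithin_le_nhds).and (eventually_mem_nhdsWithin (s := Ioi 0))).exists
  rw [Metric.cthickening_singleton _ (mem_Ioi.mp hr0).le] at hr
  exact ⟨r, hr0, ENNReal.toReal_le_of_le_ofReal hc.le hr.le⟩

section NearSupport

variable {μ : Measure ℝ} [IsFiniteMeasure μ] {u : ℝ} {z : ℂ} {r : ℝ}

lemma measureReal_closedBall_div_sq_le_Inu (hz : 0 < z.im) (hr : 0 < r)
    (hzr : ‖z - u‖ ≤ r) : μ.real (Metric.closedBall u r) / r ^ 2 ≤ 4 * Inu μ z := by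
  have hoff := mem_offSupport_of_im_pos (μ := μ) hz
  have hsub : Metric.closedBall u r ⊆ {x : ℝ | ((2 * r) ^ 2)⁻¹ ≤ ‖((x : ℂ) - z)⁻¹‖ ^ 2} := by
    intro x hx
    have hxz : 0 < ‖(x : ℂ) - z‖ := norm_pos_iff.mpr fun h0 => by
      simpa [hz.ne'] using congrArg Complex.im h0
    have hle : ‖(x : ℂ) - z‖ ≤ 2 * r := calc
      ‖(x : ℂ) - z‖ ≤ ‖(x : ℂ) - u‖ + ‖(u : ℂ) - z‖ := norm_sub_le_norm_sub_add_norm_sub _ _ _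
      _ ≤ r + r := by
        gcongr
        · rw [← Complex.ofReal_sub, Complex.norm_real, ← dist_eq_norm]
          exact hx
        · rwa [norm_sub_rev]
      _ = 2 * r := by ring
    rw [mem_ofPred_eq, norm_inv, inv_pow]
    gcongr
  have hmarkov := mul_meas_ge_le_integral_of_nonneg
    (Eventually.of_forall fun x : ℝ => sq_nonneg ‖((x : ℂ) - z)⁻¹‖)
    (integrable_norm_resolvent_sq hoff) ((2 * r) ^ 2)⁻¹
  rw [← Inu_eq_integral_norm_sq] at hmarkov
  calc μ.real (Metric.closedBall u r) / r ^ 2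
      = 4 * (((2 * r) ^ 2)⁻¹ * μ.real (Metric.closedBall u r)) := by field_simp; norm_num
    _ ≤ 4 * Inu μ z := by
        gcongr
        exact (mul_le_mul_of_nonneg_left (measureReal_mono hsub) (by positivity)).trans hmarkov

lemma norm_setIntegral_closedBall_resolvent_sq_le (hz : 0 < z.im) :
    ‖∫ x : ℝ in Metric.closedBall u r, ((x : ℂ) - z)⁻¹ ∂μ‖ ^ 2
      ≤ μ.real (Metric.closedBall u r) * Inu μ z := by
  have hoff := mem_offSupport_of_im_pos (μ := μ) hz
  have hcs := norm_integral_mul_sq_le (P := μ.restrict (Metric.closedBall u r))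
    (memLp_const (1 : ℂ)) ((memLp_resolvent hoff 2).restrict _)
  simp only [one_mul, norm_one, one_pow, integral_const, smul_eq_mul, mul_one,
    measureReal_restrict_apply_univ] at hcs
  refine hcs.trans ?_
  gcongr
  rw [Inu_eq_integral_norm_sq]
  exact setIntegral_le_integral (integrable_norm_resolvent_sq hoff)
    (Eventually.of_forall fun _ => sq_nonneg _)

end NearSupport

section NearSupportProbability

variable {μ : Measure ℝ} [IsProbabilityMeasure μ] {u : ℝ} {z : ℂ} {r : ℝ}

lemma norm_setIntegral_compl_closedBall_resolvent_le (hr : 0 < r) (hzr : ‖z - u‖ < r / 2) :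
    ‖∫ x : ℝ in (Metric.closedBall u r)ᶜ, ((x : ℂ) - z)⁻¹ ∂μ‖ ≤ 2 / r := by
  have hbound : ∀ x ∈ (Metric.closedBall u r)ᶜ, ‖((x : ℂ) - z)⁻¹‖ ≤ 2 / r := by
    intro x hx
    have hxu : r < ‖(x : ℂ) - u‖ := by
      rw [← Complex.ofReal_sub, Complex.norm_real, ← dist_eq_norm]
      simpa using hx
    have htri : ‖(x : ℂ) - u‖ ≤ ‖(x : ℂ) - z‖ + ‖z - u‖ := norm_sub_le_norm_sub_add_norm_sub _ _ _
    rw [norm_inv, ← inv_div]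
    exact inv_anti₀ (half_pos hr) (by linarith)
  refine (norm_setIntegral_le_of_norm_le_const (measure_lt_top _ _) hbound).trans ?_
  exact mul_le_of_le_one_right (by positivity) measureReal_le_one

lemma norm_mTr_sq_le (hz : 0 < z.im) (hr : 0 < r) (hzr : ‖z - u‖ < r / 2) :
    ‖mTr μ z‖ ^ 2 ≤ 2 * (μ.real (Metric.closedBall u r) * Inu μ z) + 8 / r ^ 2 := by
  set near := ∫ x : ℝ in Metric.closedBall u r, ((x : ℂ) - z)⁻¹ ∂μ
  set far := ∫ x : ℝ in (Metric.closedBall u r)ᶜ, ((x : ℂ) - z)⁻¹ ∂μ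
  have hsplit : near + far = mTr μ z := integral_add_compl measurableSet_closedBall
    (integrable_resolvent (mem_offSupport_of_im_pos hz))
  calc ‖mTr μ z‖ ^ 2 ≤ (‖near‖ + ‖far‖) ^ 2 := by
        gcongr
        exact hsplit ▸ norm_add_le near far
    _ ≤ 2 * (‖near‖ ^ 2 + ‖far‖ ^ 2) := add_sq_le
    _ ≤ 2 * (μ.real (Metric.closedBall u r) * Inu μ z + (2 / r) ^ 2) := by
        gcongr
        · exact norm_setIntegral_closedBall_resolvent_sq_le hz
        · exact norm_setIntegral_compl_closedBall_resolvent_le hr hzr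
    _ = 2 * (μ.real (Metric.closedBall u r) * Inu μ z) + 8 / r ^ 2 := by ring

lemma eventually_Inu_le (hz : z ∈ offSupport μ) : ∃ C, ∀ᶠ w in 𝓝 z, Inu μ w ≤ C := by
  obtain ⟨ε, hε, hdist⟩ := exists_forall_le_norm_sub hz
  refine ⟨(ε ^ 2)⁻¹, ?_⟩
  filter_upwards [Metric.ball_mem_nhds z hε, isOpen_offSupport.mem_nhds hz] with w hw hoff
  rw [Inu_eq_integral_norm_sq]
  calc ∫ x : ℝ, ‖((x : ℂ) - w)⁻¹‖ ^ 2 ∂μ ≤ ∫ _, (ε ^ 2)⁻¹ ∂μ := by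
        refine integral_mono_ae (integrable_norm_resolvent_sq hoff) (integrable_const _) ?_
        filter_upwards [Measure.support_mem_ae] with x hx
        have := hdist x hx w hw
        simp only [norm_inv, inv_pow]
        gcongr
    _ = (ε ^ 2)⁻¹ := by simp

lemma Inu_mul_sq_le {L : ℝ} (hL0 : 0 < L) (hL : ∀ x ∈ μ.support, |x| ≤ L) (hz : 2 * L ≤ ‖z‖) :
    Inu μ z * (L + ‖z‖) ^ 2 ≤ 9 := by
  have hdist : ∀ x ∈ μ.support, ‖z‖ - L ≤ ‖(x : ℂ) - z‖ := fun x hx => by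
    have htri := norm_sub_norm_le z (x : ℂ)
    rw [norm_sub_rev, Complex.norm_real, Real.norm_eq_abs] at htri
    linarith [hL x hx]
  have hgap : 0 < ‖z‖ - L := by linarith
  have hoff : z ∈ offSupport μ := fun x hx hxz => by
    simpa [hxz] using hgap.trans_le (hdist x hx)
  calc Inu μ z * (L + ‖z‖) ^ 2 ≤ ((‖z‖ - L) ^ 2)⁻¹ * (3 * (‖z‖ - L)) ^ 2 := by
        gcongr
        · rw [Inu_eq_integral_norm_sq]
          calc ∫ x : ℝ, ‖((x : ℂ) - z)⁻¹‖ ^ 2 ∂μ ≤ ∫ _, ((‖z‖ - L) ^ 2)⁻¹ ∂μ := by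
                refine integral_mono_ae (integrable_norm_resolvent_sq hoff)
                  (integrable_const _) ?_
                filter_upwards [Measure.support_mem_ae] with x hx
                have := hdist x hx
                simp only [norm_inv, inv_pow]
                gcongr
            _ = ((‖z‖ - L) ^ 2)⁻¹ := by simp
        · linarith
    _ = 9 := by field_simp; norm_num

end NearSupportProbability

/-- Compactly supported measures on `ℝ` whose mass near each point of the support decays more
slowly than the square of the radius, which forces `Inu μ` to blow up at the support. Jacobi-type
densities with exponents below `1` are of this kind. -/
structure IsSquareSingular (μ : Measure ℝ) : Prop where
  isCompact_support : IsCompact μ.support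
  tendsto_mass_div_sq : ∀ u ∈ μ.support,
    Tendsto (fun r => μ.real (Metric.closedBall u r) / r ^ 2) (𝓝[>] 0) atTop

namespace IsSquareSingular

variable {μ : Measure ℝ} [IsProbabilityMeasure μ] {u : ℝ}

lemma tendsto_Inu_atTop (hμ : IsSquareSingular μ) (hu : u ∈ μ.support) :
    Tendsto (Inu μ) (𝓝[ℂ⁺] u) atTop := by
  have hdist : Tendsto (fun z : ℂ => ‖z - u‖) (𝓝[ℂ⁺] u) (𝓝[>] 0) := by
    refine tendsto_nhdsWithin_iff.mpr ⟨?_, ?_⟩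
    · exact (tendsto_norm_sub_self _).mono_left nhdsWithin_le_nhds
    · filter_upwards [self_mem_nhdsWithin] with z hz
      exact norm_pos_iff.mpr (sub_ne_zero.mpr fun h0 => hz.ne' (h0 ▸ ofReal_im u))
  have hmass := (hμ.tendsto_mass_div_sq u hu).comp hdist
  refine (tendsto_const_mul_atTop_of_pos four_pos).mp (tendsto_atTop_mono' _ ?_ hmass)
  filter_upwards [self_mem_nhdsWithin, hdist self_mem_nhdsWithin] with z hz hpos
  exact measureReal_closedBall_div_sq_le_Inu hz hpos le_rfl

lemma norm_mTr_sq_isLittleO_Inu [NullSingletonClass μ] (hμ : IsSquareSingular μ)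
    (hu : u ∈ μ.support) : (fun z => ‖mTr μ z‖ ^ 2) =o[𝓝[ℂ⁺] (u : ℂ)] Inu μ := by
  refine Asymptotics.IsLittleO.of_bound fun c hc => ?_
  obtain ⟨r, hr, hmass⟩ := exists_measureReal_closedBall_le μ u (show 0 < c / 4 by positivity)
  have hball : ∀ᶠ z in 𝓝[ℂ⁺] (u : ℂ), z ∈ Metric.ball (u : ℂ) (r / 2) :=
    nhdsWithin_le_nhds (Metric.ball_mem_nhds _ (half_pos hr))
  filter_upwards [self_mem_nhdsWithin, hball,
    (hμ.tendsto_Inu_atTop hu).eventually_ge_atTop (16 / (c * r ^ 2))] with z hz hzu hI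
  have hI0 : 0 < Inu μ z := Inu_pos (mem_offSupport_of_im_pos hz)
  rw [norm_pow, norm_norm, Real.norm_of_nonneg hI0.le]
  calc ‖mTr μ z‖ ^ 2 ≤ 2 * (μ.real (Metric.closedBall u r) * Inu μ z) + 8 / r ^ 2 :=
        norm_mTr_sq_le hz hr (by simpa [dist_eq_norm] using hzu)
    _ = 2 * (μ.real (Metric.closedBall u r) * Inu μ z) + c / 2 * (16 / (c * r ^ 2)) := by
        field_simp; ring
    _ ≤ 2 * (c / 4 * Inu μ z) + c / 2 * Inu μ z := by gcongr
    _ = c * Inu μ z := by ring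

end IsSquareSingular

/-! ### Jacobi-type densities are square-singular -/

lemma rpow_mul_div_rpow_le {δ x l s τ : ℝ} (hδ : 0 < δ) (hδx : δ ≤ x) (hxl : x ≤ l) (hτ : 0 ≤ τ)
    (hs : s ≤ τ) : l ^ s * (δ / l) ^ τ ≤ x ^ s := by
  have hx : 0 < x := hδ.trans_le hδx
  have hl : 0 < l := hx.trans_le hxl
  calc l ^ s * (δ / l) ^ τ ≤ l ^ s * (x / l) ^ τ := by gcongr
    _ ≤ l ^ s * (x / l) ^ s := by
        gcongr l ^ s * ?_
        exact Real.rpow_le_rpow_of_exponent_ge (by positivity) ((div_le_one hl).mpr hxl) hs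
    _ = x ^ s := by rw [← Real.mul_rpow hl.le (by positivity), mul_div_cancel₀ _ hl.ne']

-- One of the two endpoints is at distance at least half the length, so the exponents do not add up.
lemma rpow_le_jacobiWeight {A B E δ s t τ : ℝ} (hδ : 0 < δ) (hA : A + δ ≤ E) (hB : E ≤ B - δ)
    (hτ : 0 ≤ τ) (hs : s ≤ τ) (ht : t ≤ τ) :
    (B - A) ^ s * (B - A) ^ t * (1 / 2) ^ τ * (δ / (B - A)) ^ τ ≤ (E - A) ^ s * (B - E) ^ t := by
  have hl : 0 < B - A := by linarith
  have hhalf : (B - A) / 2 / (B - A) = 1 / 2 := by field_simp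
  rcases le_total (E - A) (B - E) with hle | hle
  · have hleft := rpow_mul_div_rpow_le (x := E - A) (l := B - A) hδ (by linarith) (by linarith)
      hτ hs
    have hright := rpow_mul_div_rpow_le (δ := (B - A) / 2) (x := B - E) (l := B - A)
      (half_pos hl) (by linarith) (by linarith) hτ ht
    rw [hhalf] at hright
    calc _ = (B - A) ^ s * (δ / (B - A)) ^ τ * ((B - A) ^ t * (1 / 2) ^ τ) := by ring
      _ ≤ (E - A) ^ s * (B - E) ^ t :=
          mul_le_mul hleft hright (by positivity) (Real.rpow_nonneg (by linarith) _)
  · have hleft := rpow_mul_div_rpow_le (δ := (B - A) / 2) (x := E - A) (l := B - A)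
      (half_pos hl) (by linarith) (by linarith) hτ hs
    have hright := rpow_mul_div_rpow_le (x := B - E) (l := B - A) hδ (by linarith) (by linarith)
      hτ ht
    rw [hhalf] at hleft
    calc _ = (B - A) ^ s * (1 / 2) ^ τ * ((B - A) ^ t * (δ / (B - A)) ^ τ) := by ring
      _ ≤ (E - A) ^ s * (B - E) ^ t :=
          mul_le_mul hleft hright (by positivity) (Real.rpow_nonneg (by linarith) _)

lemma exists_Icc_subset_closedBall_inter {A B u r : ℝ} (hu : u ∈ Icc A B) (hr₀ : 0 ≤ r)
    (hr : r ≤ (B - A) / 2) :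
    ∃ a, Icc a (a + r / 4) ⊆ Metric.closedBall u r ∩ Icc (A + r / 4) (B - r / 4) := by
  rw [Real.closedBall_eq_Icc, Icc_inter_Icc]
  rcases le_total u ((A + B) / 2) with hle | hle
  · refine ⟨u + r / 4, Icc_subset_Icc (sup_le ?_ ?_) (le_inf ?_ ?_)⟩ <;> linarith [hu.1, hu.2]
  · refine ⟨u - r / 2, Icc_subset_Icc (sup_le ?_ ?_) (le_inf ?_ ?_)⟩ <;> linarith [hu.1, hu.2]

lemma mul_le_measureReal_Icc_of_le_density {ρ : ℝ → ℝ} {a b k : ℝ}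
    [IsFiniteMeasure (volume.withDensity fun x => ENNReal.ofReal (ρ x))] (hk : 0 ≤ k)
    (hρ : ∀ᵐ x ∂volume.restrict (Icc a b), k ≤ ρ x) :
    k * (b - a) ≤ (volume.withDensity fun x => ENNReal.ofReal (ρ x)).real (Icc a b) := by
  refine (ENNReal.ofReal_le_iff_le_toReal (measure_ne_top _ _)).mp ?_
  rw [withDensity_apply _ measurableSet_Icc]
  calc ENNReal.ofReal (k * (b - a)) = ∫⁻ _ in Icc a b, ENNReal.ofReal k := by
        rw [setLIntegral_const, Real.volume_Icc, ENNReal.ofReal_mul hk]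
    _ ≤ ∫⁻ x in Icc a b, ENNReal.ofReal (ρ x) :=
        lintegral_mono_ae (hρ.mono fun _ hx => ENNReal.ofReal_le_ofReal hx)

lemma tendsto_div_sq_atTop_of_rpow_le {f : ℝ → ℝ} {c τ r₀ : ℝ} (hc : 0 < c) (hτ : τ < 1)
    (hr₀ : 0 < r₀) (hf : ∀ r ∈ Ioo 0 r₀, c * r ^ τ * r ≤ f r) :
    Tendsto (fun r => f r / r ^ 2) (𝓝[>] 0) atTop := by
  have hpow : Tendsto (fun r : ℝ => c * r ^ (τ - 1)) (𝓝[>] 0) atTop :=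
    (tendsto_rpow_neg_nhdsGT_zero (by linarith)).const_mul_atTop hc
  refine tendsto_atTop_mono' _ ?_ hpow
  filter_upwards [Ioo_mem_nhdsGT hr₀] with r hr
  have hr0 : 0 < r := hr.1
  calc c * r ^ (τ - 1) = c * r ^ τ * r / r ^ 2 := by
        rw [Real.rpow_sub_one hr0.ne']
        field_simp
    _ ≤ f r / r ^ 2 := by gcongr; exact hf r hr

namespace AbsJacobiData

variable {μ : Measure ℝ}

lemma nullSingletonClass (d : AbsJacobiData μ) : NullSingletonClass μ := by
  rw [d.decomp]
  infer_instance

lemma support_subset (d : AbsJacobiData μ) : μ.support ⊆ ⋃ j, Icc (d.Am j) (d.Ap j) := by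
  have hclosed : IsClosed (⋃ j, Icc (d.Am j) (d.Ap j)) :=
    isClosed_iUnion_of_finite fun j => isClosed_Icc
  refine Measure.support_subset_of_isClosed hclosed ?_
  have hnull : μ (⋃ j, Icc (d.Am j) (d.Ap j))ᶜ = 0 := by
    rw [congrArg (fun ν : Measure ℝ => ν (⋃ j, Icc (d.Am j) (d.Ap j))ᶜ) d.decomp,
      withDensity_apply _ hclosed.measurableSet.compl]
    refine setLIntegral_eq_zero hclosed.measurableSet.compl fun x hx => ?_
    simp [d.ρ_supp x hx]
  exact mem_ae_iff.mpr hnull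

lemma rpow_mul_le_measureReal_closedBall (d : AbsJacobiData μ) (j : Fin d.n) {u r τ : ℝ}
    (hu : u ∈ Icc (d.Am j) (d.Ap j)) (hr : r ∈ Ioo 0 ((d.Ap j - d.Am j) / 2)) (hτ : 0 ≤ τ)
    (hsm : d.sm j ≤ τ) (hsp : d.sp j ≤ τ) :
    (d.Cj j)⁻¹ * ((d.Ap j - d.Am j) ^ d.sm j * (d.Ap j - d.Am j) ^ d.sp j * (1 / 2) ^ τ
      * (r / 4 / (d.Ap j - d.Am j)) ^ τ) * (r / 4) ≤ μ.real (Metric.closedBall u r) := by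
  have hprob := d.prob
  have hC : 0 < (d.Cj j)⁻¹ := inv_pos.mpr (one_pos.trans_le (d.Cj_ge j))
  have hl : 0 < d.Ap j - d.Am j := sub_pos.mpr (d.lt j)
  have hr0 : 0 < r := hr.1
  obtain ⟨a, ha⟩ := exists_Icc_subset_closedBall_inter hu hr0.le hr.2.le
  rw [subset_inter_iff] at ha
  have hsub : Icc a (a + r / 4) ⊆ Icc (d.Am j) (d.Ap j) :=
    ha.2.trans (Icc_subset_Icc (by linarith) (by linarith))
  have hdensity : ∀ᵐ E ∂volume.restrict (Icc a (a + r / 4)),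
      (d.Cj j)⁻¹ * ((d.Ap j - d.Am j) ^ d.sm j * (d.Ap j - d.Am j) ^ d.sp j * (1 / 2) ^ τ
        * (r / 4 / (d.Ap j - d.Am j)) ^ τ) ≤ d.ρ E := by
    filter_upwards [ae_restrict_of_ae_restrict_of_subset hsub (d.powerLaw j),
      ae_restrict_mem measurableSet_Icc] with E hlaw hE
    refine le_trans ?_ hlaw.1
    exact mul_le_mul_of_nonneg_left (rpow_le_jacobiWeight (by positivity) (ha.2 hE).1 (ha.2 hE).2
      hτ hsm hsp) hC.le
  have hdecomp := d.decomp
  have : IsFiniteMeasure (volume.withDensity fun x => ENNReal.ofReal (d.ρ x)) :=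
    hdecomp ▸ inferInstance
  have hmass := mul_le_measureReal_Icc_of_le_density (by positivity) hdensity
  rw [← hdecomp, add_sub_cancel_left] at hmass
  exact hmass.trans (measureReal_mono ha.1)

lemma isSquareSingular (d : AbsJacobiData μ) : IsSquareSingular μ where
  isCompact_support := (isCompact_iUnion fun _ => isCompact_Icc).of_isClosed_subset
    Measure.isClosed_support d.support_subset
  tendsto_mass_div_sq u hu := by
    obtain ⟨j, hj⟩ := mem_iUnion.mp (d.support_subset hu)
    have hl : 0 < d.Ap j - d.Am j := sub_pos.mpr (d.lt j)
    have hC : 0 < (d.Cj j)⁻¹ := inv_pos.mpr (one_pos.trans_le (d.Cj_ge j))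
    set l := d.Ap j - d.Am j
    set τ := max (max (d.sm j) (d.sp j)) 0
    have hτ : τ < 1 := max_lt (max_lt (d.sm_mem j).2 (d.sp_mem j).2) one_pos
    refine tendsto_div_sq_atTop_of_rpow_le (r₀ := l / 2) (c := (d.Cj j)⁻¹ *
      (l ^ d.sm j * l ^ d.sp j * (1 / 2) ^ τ * (1 / (4 * l)) ^ τ) / 4) (by positivity) hτ
      (half_pos hl) fun r hr => ?_
    have hr0 : 0 < r := hr.1
    refine le_trans (le_of_eq ?_) (d.rpow_mul_le_measureReal_closedBall j hj hr (le_max_right _ _)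
      ((le_max_left _ _).trans (le_max_left _ _)) ((le_max_right _ _).trans (le_max_left _ _)))
    have hscale : r / 4 / l = 1 / (4 * l) * r := by field_simp
    rw [hscale, Real.mul_rpow (by positivity) hr0.le]
    ring

end AbsJacobiData

/-! ### Points of the subordination curve -/

/-- `SubordinationPoint μa μb u v m z` says that `u`, `v` in the upper half-plane solve the
subordination equations of the pair `(μa, μb)` at the point `z`, with `m` the common value of the
Stieltjes transforms. For subordination functions, `u = ωb z` and `v = ωa z`. -/
structure SubordinationPoint (μa μb : Measure ℝ) (u v m z : ℂ) : Prop where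
  left_im_pos : 0 < u.im
  right_im_pos : 0 < v.im
  im_pos : 0 < z.im
  mTr_left : mTr μa u = m
  mTr_right : mTr μb v = m
  add_add_inv : u + v + m⁻¹ = z

lemma IsPairSubordination.subordinationPoint {μa μb : Measure ℝ} {ωa ωb : ℂ → ℂ}
    (h : IsPairSubordination μa μb ωa ωb) {z : ℂ} (hz : 0 < z.im) :
    SubordinationPoint μa μb (ωb z) (ωa z) (mTr μa (ωb z)) z where
  left_im_pos := hz.trans_le (h.im_b z hz)
  right_im_pos := hz.trans_le (h.im_a z hz)
  im_pos := hz
  mTr_left := rfl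
  mTr_right := inv_injective (neg_injective ((h.eq_b z hz).symm.trans (h.eq_a z hz)))
  add_add_inv := by
    have heq := h.eq_a z hz
    rw [FTr] at heq
    linear_combination heq

namespace SubordinationPoint

variable {μa μb : Measure ℝ} {u v m z u' v' m' : ℂ}

protected lemma symm (p : SubordinationPoint μa μb u v m z) :
    SubordinationPoint μb μa v u m z where
  left_im_pos := p.right_im_pos
  right_im_pos := p.left_im_pos
  im_pos := p.im_pos
  mTr_left := p.mTr_right
  mTr_right := p.mTr_left
  add_add_inv := by rw [add_comm v, p.add_add_inv]

lemma value_ne_zero [IsProbabilityMeasure μa] (p : SubordinationPoint μa μb u v m z) : m ≠ 0 :=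
  p.mTr_left ▸ mTr_ne_zero p.left_im_pos

lemma value_im_pos [IsProbabilityMeasure μa] (p : SubordinationPoint μa μb u v m z) : 0 < m.im :=
  p.mTr_left ▸ mTr_im_pos p.left_im_pos

lemma value_im [IsFiniteMeasure μa] (p : SubordinationPoint μa μb u v m z) :
    m.im = u.im * Inu μa u :=
  p.mTr_left ▸ mTr_im (mem_offSupport_of_im_pos p.left_im_pos)

lemma resolventVariance_left [IsProbabilityMeasure μa]
    (p : SubordinationPoint μa μb u v m z) :
    resolventVariance μa u = Inu μa u - ‖m‖ ^ 2 := by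
  rw [resolventVariance_eq_sub (mem_offSupport_of_im_pos p.left_im_pos), p.mTr_left]

lemma value_im_lt (p : SubordinationPoint μa μb u v m z) (hm : m ≠ 0) :
    m.im < (u.im + v.im) * ‖m‖ ^ 2 := by
  have hz := p.im_pos
  rw [← p.add_add_inv] at hz
  simp only [add_im, inv_im, Complex.normSq_eq_norm_sq, neg_div, ← sub_eq_add_neg, sub_pos] at hz
  rwa [div_lt_iff₀ (pow_pos (norm_pos_iff.mpr hm) 2)] at hz

variable [IsProbabilityMeasure μa] [IsProbabilityMeasure μb]

lemma Inu_mul_Inu_lt (p : SubordinationPoint μa μb u v m z) :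
    Inu μa u * Inu μb v < (Inu μa u + Inu μb v) * ‖m‖ ^ 2 := by
  have hIa := Inu_pos (mem_offSupport_of_im_pos (μ := μa) p.left_im_pos)
  have hIb := Inu_pos (mem_offSupport_of_im_pos (μ := μb) p.right_im_pos)
  have him := p.value_im_lt p.value_ne_zero
  refine lt_of_mul_lt_mul_left ?_ p.value_im_pos.le
  calc m.im * (Inu μa u * Inu μb v)
      < (u.im + v.im) * ‖m‖ ^ 2 * (Inu μa u * Inu μb v) := by gcongr
    _ = (u.im * Inu μa u * Inu μb v + v.im * Inu μb v * Inu μa u) * ‖m‖ ^ 2 := by ring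
    _ = m.im * ((Inu μa u + Inu μb v) * ‖m‖ ^ 2) := by
        rw [← p.value_im, ← p.symm.value_im]
        ring

lemma resolventVariance_mul_lt (p : SubordinationPoint μa μb u v m z) :
    resolventVariance μa u * resolventVariance μb v < ‖m‖ ^ 4 := by
  rw [p.resolventVariance_left, p.symm.resolventVariance_left]
  linear_combination p.Inu_mul_Inu_lt

lemma Inu_mul_resolventVariance_lt (p : SubordinationPoint μa μb u v m z) :
    Inu μa u * resolventVariance μb v < ‖m‖ ^ 2 * Inu μb v := by
  rw [p.symm.resolventVariance_left]
  linear_combination p.Inu_mul_Inu_lt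

lemma Inu_mul_variance_le (p : SubordinationPoint μa μb u v m z) {L : ℝ} (hL₀ : 0 < L)
    (hL : ∀ x ∈ μb.support, |x| ≤ L) :
    Inu μa u * ProbabilityTheory.variance id μb ≤ Inu μb v * (L + ‖v‖) ^ 2 := by
  have hIa := Inu_pos (mem_offSupport_of_im_pos (μ := μa) p.left_im_pos)
  have hm : 0 < ‖m‖ ^ 2 := pow_pos (norm_pos_iff.mpr p.value_ne_zero) 2
  have hpos : 0 < (L + ‖v‖) ^ 2 := by positivity
  have hvar := norm_sq_mul_variance_le_resolventVariance hL
    (mem_offSupport_of_im_pos p.right_im_pos)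
  rw [p.mTr_right, div_le_iff₀ hpos] at hvar
  refine le_of_mul_le_mul_left ?_ hm
  calc ‖m‖ ^ 2 * (Inu μa u * ProbabilityTheory.variance id μb)
      = Inu μa u * (‖m‖ ^ 2 * ProbabilityTheory.variance id μb) := by ring
    _ ≤ Inu μa u * (resolventVariance μb v * (L + ‖v‖) ^ 2) := by gcongr
    _ = Inu μa u * resolventVariance μb v * (L + ‖v‖) ^ 2 := by ring
    _ ≤ ‖m‖ ^ 2 * Inu μb v * (L + ‖v‖) ^ 2 := by
        exact mul_le_mul_of_nonneg_right p.Inu_mul_resolventVariance_lt.le hpos.le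
    _ = ‖m‖ ^ 2 * (Inu μb v * (L + ‖v‖) ^ 2) := by ring

lemma resolventPairing_sub_mul_resolventPairing_sub (p : SubordinationPoint μa μb u v m z)
    (p' : SubordinationPoint μa μb u' v' m' z) (hne : m ≠ m') :
    (resolventPairing μa u u' - m * m') * (resolventPairing μb v v' - m * m') = (m * m') ^ 2 := by
  have hm := p.value_ne_zero
  have hm' := p'.value_ne_zero
  have hpaira := mTr_sub_mTr (mem_offSupport_of_im_pos (μ := μa) p.left_im_pos)
    (mem_offSupport_of_im_pos p'.left_im_pos)
  have hpairb := mTr_sub_mTr (mem_offSupport_of_im_pos (μ := μb) p.right_im_pos)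
    (mem_offSupport_of_im_pos p'.right_im_pos)
  rw [p.mTr_left, p'.mTr_left] at hpaira
  rw [p.mTr_right, p'.mTr_right] at hpairb
  set Ka := resolventPairing μa u u'
  set Kb := resolventPairing μb v v'
  have hz : (u - u') + (v - v') = m'⁻¹ - m⁻¹ := by
    linear_combination p.add_add_inv - p'.add_add_inv
  have hdiff : (m - m') * (Ka * Kb) = (m - m') * ((Ka + Kb) * (m * m')) := by
    calc (m - m') * (Ka * Kb) = (m'⁻¹ - m⁻¹) * (m * m') * (Ka * Kb) := by field_simp
      _ = ((u - u') * Ka * Kb + (v - v') * Kb * Ka) * (m * m') := by rw [← hz]; ring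
      _ = (m - m') * ((Ka + Kb) * (m * m')) := by rw [← hpaira, ← hpairb]; ring
  linear_combination mul_left_cancel₀ (sub_ne_zero.mpr hne) hdiff

theorem value_unique (p : SubordinationPoint μa μb u v m z)
    (p' : SubordinationPoint μa μb u' v' m' z) : m = m' := by
  by_contra hne
  have hcova := norm_resolventPairing_sub_sq_le (mem_offSupport_of_im_pos (μ := μa) p.left_im_pos)
    (mem_offSupport_of_im_pos p'.left_im_pos)
  have hcovb := norm_resolventPairing_sub_sq_le (mem_offSupport_of_im_pos (μ := μb) p.right_im_pos)
    (mem_offSupport_of_im_pos p'.right_im_pos)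
  rw [p.mTr_left, p'.mTr_left] at hcova
  rw [p.mTr_right, p'.mTr_right] at hcovb
  have hprod := congrArg (‖·‖ ^ 2) (p.resolventPairing_sub_mul_resolventPairing_sub p' hne)
  simp only [norm_mul, norm_pow, mul_pow] at hprod
  set Va := resolventVariance μa
  set Vb := resolventVariance μb
  have hVa : ∀ w, 0 ≤ Va w := fun w => integral_nonneg fun x => by positivity
  have hVb : ∀ w, 0 ≤ Vb w := fun w => integral_nonneg fun x => by positivity
  have hlt : Va u * Vb v * (Va u' * Vb v') < ‖m‖ ^ 4 * ‖m'‖ ^ 4 :=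
    mul_lt_mul'' p.resolventVariance_mul_lt p'.resolventVariance_mul_lt
      (mul_nonneg (hVa _) (hVb _)) (mul_nonneg (hVa _) (hVb _))
  have hle := mul_le_mul hcova hcovb (by positivity) (mul_nonneg (hVa _) (hVa _))
  refine lt_irrefl (‖m‖ ^ 4 * ‖m'‖ ^ 4) ?_
  calc ‖m‖ ^ 4 * ‖m'‖ ^ 4 = (‖m‖ ^ 2) ^ 2 * (‖m'‖ ^ 2) ^ 2 := by ring
    _ ≤ Va u * Va u' * (Vb v * Vb v') := by rw [← hprod]; exact hle
    _ = Va u * Vb v * (Va u' * Vb v') := by ring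
    _ < ‖m‖ ^ 4 * ‖m'‖ ^ 4 := hlt

end SubordinationPoint

/-! ### Local inverses of the Stieltjes transform -/

/-- `IsLocalInverse μ g l m₀` says that `mTr μ` tends to `m₀` along `l` and that `g` inverts it:
as a left inverse along `l`, and as a right inverse on the upper half-plane near `m₀`. Here `l` is
either the neighbourhood filter of a point off the support or the neighbourhood filter
`Bornology.cobounded ℂ` of infinity. -/
structure IsLocalInverse (μ : Measure ℝ) (g : ℂ → ℂ) (l : Filter ℂ) (m₀ : ℝ) : Prop where
  tendsto : Tendsto (mTr μ) l (𝓝 (m₀ : ℂ))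
  left_inv : ∀ᶠ u in l, g (mTr μ u) = u
  right_inv : ∀ᶠ m in 𝓝 (m₀ : ℂ), 0 < m.im → 0 < (g m).im ∧ mTr μ (g m) = m

lemma exists_isLocalInverse_nhds {μ : Measure ℝ} [IsProbabilityMeasure μ] {u : ℝ}
    (hu : u ∉ μ.support) :
    ∃ (m₀ : ℝ) (g : ℂ → ℂ), IsLocalInverse μ g (𝓝 (u : ℂ)) m₀ ∧ RealAnalyticAt g m₀ := by
  have hm := realAnalyticAt_mTr hu
  obtain ⟨g, hg, -, hleft, hright⟩ := hm.exists_local_inverse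
    (Inu_pos (ofReal_mem_offSupport.mpr hu)) (hasDerivAt_mTr_ofReal hu) hm.ofReal_re_eq.symm
  refine ⟨(mTr μ u).re, g, ⟨?_, hleft, ?_⟩, hg⟩
  · rw [hm.ofReal_re_eq]
    exact hm.analyticAt.continuousAt
  · filter_upwards [hright] with m hgm hm using ⟨hgm.2.mpr hm, hgm.1⟩

/-- The first moment transform `∫ x / (1 + x w) dμ(x)`, which governs the expansion
`mTr μ (-w⁻¹) = w - w ^ 2 * momentTransform μ w` of the Stieltjes transform at infinity. -/
def momentTransform (μ : Measure ℝ) (w : ℂ) : ℂ := ∫ x : ℝ, (x : ℂ) / (1 + x * w) ∂μ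

section MomentTransform

variable {μ : Measure ℝ} {L : ℝ} {w : ℂ}

lemma momentTransform_ofReal_im (μ : Measure ℝ) (t : ℝ) : (momentTransform μ t).im = 0 := by
  have hreal : momentTransform μ t = ((∫ x : ℝ, x / (1 + x * t) ∂μ : ℝ) : ℂ) := by
    rw [momentTransform, ← integral_complex_ofReal]
    push_cast
    rfl
  rw [hreal, ofReal_im]

lemma half_le_norm_one_add_mul {x : ℝ} (hx : |x| ≤ L) (hw : w ∈ Metric.ball 0 (2 * L)⁻¹) :
    1 / 2 ≤ ‖1 + (x : ℂ) * w‖ := by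
  rw [mem_ball_zero_iff] at hw
  have hL : 0 < L := by
    have := (norm_nonneg w).trans_lt hw
    rw [inv_pos] at this
    linarith
  have hmul : ‖(x : ℂ) * w‖ ≤ 1 / 2 := by
    rw [norm_mul, Complex.norm_real, Real.norm_eq_abs]
    calc |x| * ‖w‖ ≤ L * (2 * L)⁻¹ := by gcongr
      _ = 1 / 2 := by field_simp
  have htri := norm_sub_le (1 + (x : ℂ) * w) ((x : ℂ) * w)
  rw [add_sub_cancel_right, norm_one] at htri
  linarith

lemma one_add_mul_ne_zero_of_mem_ball {x : ℝ} (hx : |x| ≤ L)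
    (hw : w ∈ Metric.ball 0 (2 * L)⁻¹) : 1 + (x : ℂ) * w ≠ 0 :=
  norm_pos_iff.mp (one_half_pos.trans_le (half_le_norm_one_add_mul hx hw))

variable [IsFiniteMeasure μ]

lemma integrable_div_one_add_mul (hL : ∀ x ∈ μ.support, |x| ≤ L)
    (hw : w ∈ Metric.ball 0 (2 * L)⁻¹) : Integrable (fun x : ℝ => (x : ℂ) / (1 + x * w)) μ := by
  refine Integrable.of_bound (Measurable.aestronglyMeasurable (by fun_prop)) (L / (1 / 2)) ?_
  filter_upwards [Measure.support_mem_ae] with x hx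
  rw [norm_div, Complex.norm_real, Real.norm_eq_abs]
  have := half_le_norm_one_add_mul (hL x hx) hw
  gcongr
  exacts [(abs_nonneg x).trans (hL x hx), hL x hx]

lemma differentiableAt_momentTransform (hL : ∀ x ∈ μ.support, |x| ≤ L)
    (hw : w ∈ Metric.ball 0 (2 * L)⁻¹) : DifferentiableAt ℂ (momentTransform μ) w := by
  refine (hasDerivAt_integral_of_dominated_loc_of_deriv_le
    (F := fun (w : ℂ) (x : ℝ) => (x : ℂ) / (1 + x * w))
    (F' := fun (w : ℂ) (x : ℝ) => -(x : ℂ) ^ 2 / (1 + x * w) ^ 2)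
    (bound := fun _ => L ^ 2 / (1 / 2) ^ 2) (Metric.isOpen_ball.mem_nhds hw)
    (Eventually.of_forall fun w => Measurable.aestronglyMeasurable (by fun_prop))
    (integrable_div_one_add_mul hL hw)
    (Measurable.aestronglyMeasurable (by fun_prop)) ?_ (integrable_const _) ?_).2.differentiableAt
  · filter_upwards [Measure.support_mem_ae] with x hx w hw
    rw [norm_div, norm_neg, norm_pow, norm_pow, Complex.norm_real, Real.norm_eq_abs]
    have := half_le_norm_one_add_mul (hL x hx) hw
    gcongr
    exact hL x hx
  · filter_upwards [Measure.support_mem_ae] with x hx w hw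
    have hlin : HasDerivAt (fun w : ℂ => 1 + (x : ℂ) * w) (x : ℂ) w := by
      simpa using ((hasDerivAt_id w).const_mul (x : ℂ)).const_add 1
    have hquot := (hasDerivAt_const w (x : ℂ)).fun_div hlin
      (one_add_mul_ne_zero_of_mem_ball (hL x hx) hw)
    simpa [sq] using hquot

lemma realAnalyticAt_momentTransform (hμ : IsCompact μ.support) :
    RealAnalyticAt (momentTransform μ) 0 where
  analyticAt := by
    obtain ⟨L, hL₀, hL⟩ := exists_forall_abs_le hμ
    rw [ofReal_zero]
    exact DifferentiableOn.analyticAt (s := Metric.ball 0 (2 * L)⁻¹)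
      (fun w hw => (differentiableAt_momentTransform hL hw).differentiableWithinAt)
      (Metric.ball_mem_nhds _ (by positivity))
  im_eq_zero := Eventually.of_forall (momentTransform_ofReal_im μ)

end MomentTransform

/-- The Stieltjes transform in the coordinate `w = -z⁻¹` at infinity, see `mTr_neg_inv`. -/
def mTrAtInfty (μ : Measure ℝ) (w : ℂ) : ℂ := w * (1 - w * momentTransform μ w)

section AtInfty

variable {μ : Measure ℝ} [IsFiniteMeasure μ]

lemma realAnalyticAt_one_sub_mul_momentTransform (hμ : IsCompact μ.support) :
    RealAnalyticAt (fun w => 1 - w * momentTransform μ w) 0 := by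
  have := (RealAnalyticAt.const 1).sub (RealAnalyticAt.id.mul (realAnalyticAt_momentTransform hμ))
  rwa [ofReal_one] at this

lemma realAnalyticAt_mTrAtInfty (hμ : IsCompact μ.support) : RealAnalyticAt (mTrAtInfty μ) 0 :=
  RealAnalyticAt.id.mul (realAnalyticAt_one_sub_mul_momentTransform hμ)

lemma hasDerivAt_mTrAtInfty (hμ : IsCompact μ.support) : HasDerivAt (mTrAtInfty μ) 1 0 := by
  have hfactor := (realAnalyticAt_one_sub_mul_momentTransform hμ).analyticAt.differentiableAt
  rw [ofReal_zero] at hfactor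
  have hprod := (hasDerivAt_id' (0 : ℂ)).fun_mul hfactor.hasDerivAt
  rw [zero_mul, zero_mul, sub_zero, mul_one, add_zero] at hprod
  exact hprod

lemma mTr_neg_inv [IsProbabilityMeasure μ] {L : ℝ} {w : ℂ} (hL : ∀ x ∈ μ.support, |x| ≤ L)
    (hw : w ∈ Metric.ball 0 (2 * L)⁻¹) (hw₀ : w ≠ 0) : mTr μ (-w⁻¹) = mTrAtInfty μ w := by
  have hint := (integrable_div_one_add_mul hL hw).const_mul w
  calc mTr μ (-w⁻¹) = ∫ x : ℝ, w * (1 - w * ((x : ℂ) / (1 + x * w))) ∂μ := by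
        refine integral_congr_ae ?_
        filter_upwards [Measure.support_mem_ae] with x hx
        have hne := one_add_mul_ne_zero_of_mem_ball (hL x hx) hw
        have hsub : (x : ℂ) - -w⁻¹ = (1 + x * w) / w := by
          field_simp
          ring
        rw [hsub, inv_div, eq_comm]
        calc w * (1 - w * ((x : ℂ) / (1 + x * w)))
            = w * ((1 + x * w - w * x) / (1 + x * w)) := by
              rw [sub_div, div_self hne, mul_div_assoc]
          _ = w / (1 + x * w) := by ring
    _ = mTrAtInfty μ w := by
        rw [integral_const_mul, integral_sub (integrable_const _) hint, integral_const_mul]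
        simp [mTrAtInfty, momentTransform]

lemma eventually_mTr_neg_inv [IsProbabilityMeasure μ] (hμ : IsCompact μ.support) :
    ∀ᶠ w in 𝓝 (0 : ℂ), w ≠ 0 → mTr μ (-w⁻¹) = mTrAtInfty μ w := by
  obtain ⟨L, hL₀, hL⟩ := exists_forall_abs_le hμ
  filter_upwards [Metric.ball_mem_nhds (0 : ℂ) (ε := (2 * L)⁻¹) (by positivity)] with w hw hw₀
    using mTr_neg_inv hL hw hw₀

end AtInfty

lemma tendsto_neg_inv_cobounded :
    Tendsto (fun v : ℂ => -v⁻¹) (Bornology.cobounded ℂ) (𝓝 0) := by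
  simpa using (tendsto_inv₀_cobounded (α := ℂ)).neg

lemma isLocalInverse_cobounded {μ : Measure ℝ} [IsProbabilityMeasure μ] (hμ : IsCompact μ.support)
    {k : ℂ → ℂ} (hk : Tendsto k (𝓝 0) (𝓝 0))
    (hleft : ∀ᶠ w in 𝓝 0, k (mTrAtInfty μ w) = w)
    (hright : ∀ᶠ m in 𝓝 0, mTrAtInfty μ (k m) = m ∧ (0 < (k m).im ↔ 0 < m.im)) :
    IsLocalInverse μ (fun m => -(k m)⁻¹) (Bornology.cobounded ℂ) 0 := by
  have hmTr : ∀ᶠ v in Bornology.cobounded ℂ, mTr μ v = mTrAtInfty μ (-v⁻¹) := by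
    filter_upwards [tendsto_neg_inv_cobounded.eventually (eventually_mTr_neg_inv hμ),
      Bornology.eventually_ne_cobounded 0] with v hv hv₀
    simpa [inv_neg] using hv (neg_ne_zero.mpr (inv_ne_zero hv₀))
  have htendsto : Tendsto (mTrAtInfty μ) (𝓝 0) (𝓝 0) := by
    simpa [mTrAtInfty] using (hasDerivAt_mTrAtInfty hμ).continuousAt.tendsto
  refine ⟨?_, ?_, ?_⟩
  · rw [ofReal_zero]
    exact (htendsto.comp tendsto_neg_inv_cobounded).congr' (hmTr.mono fun _ h => h.symm)
  · filter_upwards [hmTr, tendsto_neg_inv_cobounded.eventually hleft] with v hv hkv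
    rw [hv, hkv, inv_neg, neg_neg, inv_inv]
  · rw [ofReal_zero]
    filter_upwards [hright, hk.eventually (eventually_mTr_neg_inv hμ)] with m hkm hmk hm
    have him := hkm.2.mpr hm
    have hne : k m ≠ 0 := fun h => by simp [h] at him
    refine ⟨?_, (hmk hne).trans hkm.1⟩
    rw [neg_im, inv_im, neg_div, neg_neg]
    exact div_pos him (normSq_pos.mpr hne)

lemma exists_isLocalInverse_cobounded {μ : Measure ℝ} [IsProbabilityMeasure μ]
    (hμ : IsCompact μ.support) :
    ∃ g R : ℂ → ℂ, IsLocalInverse μ g (Bornology.cobounded ℂ) 0 ∧ RealAnalyticAt R 0 ∧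
      ∀ᶠ m in 𝓝 0, 0 < m.im → R m = g m + m⁻¹ := by
  have hM0 : mTrAtInfty μ (0 : ℝ) = (0 : ℝ) := by simp [mTrAtInfty]
  obtain ⟨k, hk, hk0, hleft, hright⟩ := (realAnalyticAt_mTrAtInfty hμ).exists_local_inverse one_pos
    (by simpa using hasDerivAt_mTrAtInfty hμ) hM0
  have hkt : Tendsto k (𝓝 0) (𝓝 0) := by
    have := hk.analyticAt.continuousAt.tendsto
    rwa [hk0, ofReal_zero] at this
  rw [ofReal_zero] at hleft hright
  refine ⟨_, fun m => momentTransform μ (k m) / (1 - k m * momentTransform μ (k m)),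
    isLocalInverse_cobounded hμ hkt hleft hright, ?_, ?_⟩
  · refine ((realAnalyticAt_momentTransform hμ).comp hk hk0).div
      ((realAnalyticAt_one_sub_mul_momentTransform hμ).comp hk hk0) ?_
    rw [hk0]
    simp
  · filter_upwards [hright] with m hm him
    have hk_im := hm.2.mpr him
    have hkne : k m ≠ 0 := fun h => by simp [h] at hk_im
    have hmne : m ≠ 0 := fun h => by simp [h] at him
    have hkm : k m * (1 - k m * momentTransform μ (k m)) = m := hm.1
    have hfactor : 1 - k m * momentTransform μ (k m) ≠ 0 :=
      right_ne_zero_of_mul (hkm.trans_ne hmne)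
    calc momentTransform μ (k m) / (1 - k m * momentTransform μ (k m))
        = -(k m)⁻¹ + (k m * (1 - k m * momentTransform μ (k m)))⁻¹ := by
          rw [div_eq_iff hfactor, mul_inv, add_mul, mul_assoc, inv_mul_cancel₀ hfactor]
          field_simp
          ring
      _ = -(k m)⁻¹ + m⁻¹ := by rw [hkm]

/-! ### Continuation of an inverse branch -/

lemma exists_sphere_le_norm_sub {Z : ℂ → ℂ} {m₀ c : ℂ} (hZ : AnalyticAt ℂ Z m₀)
    (hne : ¬ ∀ᶠ m in 𝓝 m₀, Z m = c) {R : ℝ} (hR : 0 < R) :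
    ∃ r ∈ Ioo 0 R, ∃ δ > 0, ∀ m ∈ Metric.sphere m₀ r, δ ≤ ‖Z m - c‖ := by
  have hiso := (hZ.fun_sub analyticAt_const).eventually_eq_zero_or_eventually_ne_zero.resolve_left
    (fun h => hne (h.mono fun _ => sub_eq_zero.mp))
  obtain ⟨ε, hε, hball⟩ := Metric.eventually_nhds_iff_ball.mp
    ((eventually_nhdsWithin_iff.mp hiso).and hZ.eventually_analyticAt)
  have hr : 0 < min ε R / 2 := by positivity
  have hrε : min ε R / 2 < ε := by linarith [min_le_left ε R]
  have hrR : min ε R / 2 < R := by linarith [min_le_right ε R]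
  have hcont : ContinuousOn (fun m => ‖Z m - c‖) (Metric.sphere m₀ (min ε R / 2)) := fun m hm =>
    ((hball m (Metric.sphere_subset_ball hrε hm)).2.continuousAt.sub
      continuousAt_const).norm.continuousWithinAt
  obtain ⟨m, hm, hmin⟩ := (isCompact_sphere m₀ (min ε R / 2)).exists_isMinOn
    (NormedSpace.sphere_nonempty.mpr hr.le) hcont
  exact ⟨_, ⟨hr, hrR⟩, _, norm_pos_iff.mpr <| (hball m (Metric.sphere_subset_ball hrε hm)).1 <|
    Metric.ne_of_mem_sphere hm hr.ne', hmin⟩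

lemma eventually_right_inv_of_left_inv {Z n : ℂ → ℂ} {m : ℂ} {s : Set ℂ} (hZ : AnalyticAt ℂ Z m)
    (hs : s ∈ 𝓝 m) (hleft : ∀ᶠ m' in 𝓝 m, n (Z m') = m') :
    ∀ᶠ w in 𝓝 (Z m), n w ∈ s ∧ Z (n w) = w := by
  have hopen : 𝓝 (Z m) ≤ map Z (𝓝 m) := by
    refine hZ.eventually_constant_or_nhds_le_map_nhds.resolve_left fun hconst => ?_
    have hpunct : ∀ᶠ m' in 𝓝[≠] m, m' = m := by
      filter_upwards [nhdsWithin_le_nhds hconst, nhdsWithin_le_nhds hleft] with m' hm' hn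
      rw [← hn, hm', hleft.self_of_nhds]
    obtain ⟨m', heq, hm'⟩ := (hpunct.and self_mem_nhdsWithin).exists
    exact hm' heq
  filter_upwards [hopen (image_mem_map (inter_mem hs hleft))]
  rintro _ ⟨m', ⟨hm's, hm'⟩, rfl⟩
  exact ⟨mem_of_eq_of_mem hm' hm's, congrArg Z hm'⟩

-- Continuity method: the set where the conclusion holds is open and closed in the half-disc.
lemma right_inv_of_le_norm_sub_on_sphere {Z n : ℂ → ℂ} {m₀ c : ℂ} {r δ : ℝ}
    (hn : ContinuousOn n ℂ⁺) (hZ : ∀ m ∈ Metric.closedBall m₀ r, AnalyticAt ℂ Z m)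
    (him : ∀ z : ℂ, 0 < z.im → 0 < (n z).im)
    (hleft : ∀ m ∈ Metric.ball m₀ r, 0 < m.im → 0 < (Z m).im → n (Z m) = m)
    (hδ : ∀ m ∈ Metric.sphere m₀ r, δ ≤ ‖Z m - c‖)
    (hex : ∃ z ∈ Metric.ball c δ ∩ ℂ⁺, n z ∈ Metric.ball m₀ r ∧ Z (n z) = z) :
    ∀ z ∈ Metric.ball c δ ∩ ℂ⁺, n z ∈ Metric.ball m₀ r ∧ Z (n z) = z := by
  set D := Metric.ball c δ ∩ ℂ⁺
  have hDconn : IsPreconnected D :=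
    ((convex_ball _ _).inter (convex_halfSpace_im_gt 0)).isPreconnected
  have hDopen : IsOpen D := Metric.isOpen_ball.inter UpperHalfPlane.isOpen_upperHalfPlaneSet
  let G := {z | z ∈ D ∧ n z ∈ Metric.ball m₀ r ∧ Z (n z) = z}
  suffices hDG : D ⊆ G from fun z hz => (hDG hz).2
  have hGopen : IsOpen G := by
    refine isOpen_iff_mem_nhds.mpr fun z ⟨hzD, hnz, hZz⟩ => ?_
    have hZan := hZ _ (Metric.ball_subset_closedBall hnz)
    have hev : ∀ᶠ m in 𝓝 (n z), n (Z m) = m := by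
      filter_upwards [Metric.isOpen_ball.mem_nhds hnz,
        UpperHalfPlane.isOpen_upperHalfPlaneSet.mem_nhds (him z hzD.2),
        hZan.continuousAt.preimage_mem_nhds (UpperHalfPlane.isOpen_upperHalfPlaneSet.mem_nhds
          (hZz.symm ▸ hzD.2 : Z (n z) ∈ ℂ⁺))] with m using hleft m
    have hright := eventually_right_inv_of_left_inv hZan (Metric.isOpen_ball.mem_nhds hnz) hev
    rw [hZz] at hright
    exact inter_mem (hDopen.mem_nhds hzD) hright
  obtain ⟨z₀, hz₀, hz₀G⟩ := hex
  refine hDconn.subset_of_closure_inter_subset hGopen ⟨z₀, hz₀, hz₀, hz₀G⟩ ?_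
  rintro z ⟨hzG, hzD⟩
  have : (𝓝[G] z).NeBot := mem_closure_iff_nhdsWithin_neBot.mp hzG
  have hntend : Tendsto n (𝓝[G] z) (𝓝 (n z)) := (hn.continuousAt
    (UpperHalfPlane.isOpen_upperHalfPlaneSet.mem_nhds hzD.2)).tendsto.mono_left nhdsWithin_le_nhds
  have hball : n z ∈ Metric.closedBall m₀ r := Metric.isClosed_closedBall.mem_of_tendsto hntend
    (eventually_mem_nhdsWithin.mono fun w hw => Metric.ball_subset_closedBall hw.2.1)
  have hZz : Z (n z) = z := tendsto_nhds_unique_of_eventuallyEq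
    ((hZ _ hball).continuousAt.tendsto.comp hntend) (tendsto_id.mono_left nhdsWithin_le_nhds)
    (eventually_mem_nhdsWithin.mono fun w hw => hw.2.2)
  refine ⟨hzD, Metric.mem_ball.mpr <| lt_of_le_of_ne hball fun hsphere => ?_, hZz⟩
  have hfar := hδ (n z) hsphere
  rw [hZz, ← dist_eq_norm] at hfar
  exact hfar.not_gt hzD.1

theorem isInverseBranch_of_tendsto {Z n : ℂ → ℂ} {m₀ E₀ : ℝ} {F : Filter ℂ} [F.NeBot]
    (hF : F ≤ 𝓝[ℂ⁺] (E₀ : ℂ)) (hn : ContinuousOn n ℂ⁺)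
    (him : ∀ z : ℂ, 0 < z.im → 0 < (n z).im) (hZ : RealAnalyticAt Z m₀)
    (hleft : ∀ᶠ m in 𝓝 (m₀ : ℂ), 0 < m.im → 0 < (Z m).im → n (Z m) = m)
    (hnF : Tendsto n F (𝓝 (m₀ : ℂ))) (hZF : ∀ᶠ z in F, Z (n z) = z) :
    IsInverseBranch Z n m₀ E₀ := by
  have hne : ¬ ∀ᶠ m in 𝓝 (m₀ : ℂ), Z m = E₀ := fun h => by
    obtain ⟨z, hz, hzE, hzim⟩ :=
      (hZF.and ((hnF.eventually h).and (hF self_mem_nhdsWithin))).exists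
    rw [hz.symm.trans hzE] at hzim
    exact lt_irrefl _ (show (0 : ℝ) < (E₀ : ℂ).im from hzim)
  obtain ⟨R, hR, hball⟩ := Metric.eventually_nhds_iff_ball.mp
    (hZ.analyticAt.eventually_analyticAt.and hleft)
  have key : ∀ ε > 0, ∀ᶠ z in 𝓝[ℂ⁺] (E₀ : ℂ), n z ∈ Metric.ball (m₀ : ℂ) ε ∧ Z (n z) = z := by
    intro ε hε
    obtain ⟨r, hr, δ, hδ, hsphere⟩ := exists_sphere_le_norm_sub hZ.analyticAt hne (lt_min hR hε)
    have hD : Metric.ball (E₀ : ℂ) δ ∩ ℂ⁺ ∈ 𝓝[ℂ⁺] (E₀ : ℂ) :=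
      inter_mem (nhdsWithin_le_nhds (Metric.ball_mem_nhds _ hδ)) self_mem_nhdsWithin
    have hrR : r < R := hr.2.trans_le (min_le_left _ _)
    have hall := right_inv_of_le_norm_sub_on_sphere hn
      (fun m hm => (hball m (Metric.closedBall_subset_ball hrR hm)).1) him
      (fun m hm => (hball m (Metric.ball_subset_ball hrR.le hm)).2) hsphere
      ((Eventually.and (hF hD) ((hnF.eventually (Metric.ball_mem_nhds _ hr.1)).and hZF)).exists)
    filter_upwards [hD] with z hz
    exact ⟨Metric.ball_subset_ball (hr.2.le.trans (min_le_right _ _)) (hall z hz).1, (hall z hz).2⟩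
  exact ⟨hZ, Metric.tendsto_nhds.mpr fun ε hε => (key ε hε).mono fun _ h => h.1, him,
    (key 1 one_pos).mono fun _ h => h.2, hleft⟩

/-! ### Limits of subordination points -/

lemma tendsto_cobounded_or_exists_tendsto_nhds {X Y : Type*} [PseudoMetricSpace Y] [ProperSpace Y]
    (F : Ultrafilter X) (f : X → Y) :
    Tendsto f F (Bornology.cobounded Y) ∨ ∃ y, Tendsto f F (𝓝 y) := by
  rw [or_iff_not_imp_left, Metric.cobounded_eq_cocompact]
  intro h
  obtain ⟨K, hKF, hK⟩ := (disjoint_cocompact_right _).mp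
    ((Ultrafilter.disjoint_iff_not_le (f := F.map f)).mpr h)
  obtain ⟨y, -, hy⟩ := hK.ultrafilter_le_nhds (F.map f) (le_principal_iff.mpr hKF)
  exact ⟨y, hy⟩

section LimitPoints

variable {μa μb : Measure ℝ} {u v n : ℂ → ℂ} {F : Filter ℂ} [F.NeBot]

lemma im_eq_zero_of_tendsto [IsProbabilityMeasure μa] {u₀ : ℂ}
    (hp : ∀ᶠ z in F, SubordinationPoint μa μb (u z) (v z) (n z) z)
    (hn : Tendsto (fun z => (n z).im) F (𝓝 0)) (hu : Tendsto u F (𝓝 u₀)) : u₀.im = 0 := by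
  refine le_antisymm (not_lt.mp fun hpos => ?_) <|
    ge_of_tendsto ((continuous_im.tendsto u₀).comp hu) (hp.mono fun z hz => hz.left_im_pos.le)
  have hoff : u₀ ∈ offSupport μa := mem_offSupport_of_im_pos hpos
  have hlim : (mTr μa u₀).im = 0 := tendsto_nhds_unique_of_eventuallyEq
    ((continuous_im.tendsto _).comp ((analyticAt_mTr hoff).continuousAt.tendsto.comp hu)) hn
    (hp.mono fun z hz => congrArg im hz.mTr_left)
  exact (mTr_im_pos hpos).ne' hlim

variable [IsProbabilityMeasure μa] [IsProbabilityMeasure μb]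

lemma notMem_support_of_tendsto_of_Inu_mul_sq_le [NullSingletonClass μb] (ha : IsSquareSingular μa)
    {t L C : ℝ} (hL₀ : 0 < L) (hL : ∀ x ∈ μb.support, |x| ≤ L)
    (hp : ∀ᶠ z in F, SubordinationPoint μa μb (u z) (v z) (n z) z)
    (hu : Tendsto u F (𝓝 (t : ℂ))) (hC : ∀ᶠ z in F, Inu μb (v z) * (L + ‖v z‖) ^ 2 ≤ C) :
    t ∉ μa.support := fun ht => by
  have hu' : Tendsto u F (𝓝[ℂ⁺] (t : ℂ)) :=
    tendsto_nhdsWithin_iff.mpr ⟨hu, hp.mono fun z hz => hz.left_im_pos⟩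
  have hlarge := (((ha.tendsto_Inu_atTop ht).comp hu').atTop_mul_const
    (variance_id_pos (memLp_id_of_abs_le hL))).eventually_gt_atTop C
  obtain ⟨z, hz, hbound, hgt⟩ := (hp.and (hC.and hlarge)).exists
  exact (hgt.trans_le ((hz.Inu_mul_variance_le hL₀ hL).trans hbound)).false

lemma notMem_support_of_tendsto_of_mem_support [NullSingletonClass μa] [NullSingletonClass μb]
    (ha : IsSquareSingular μa) (hb : IsSquareSingular μb) {t s : ℝ}
    (hp : ∀ᶠ z in F, SubordinationPoint μa μb (u z) (v z) (n z) z)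
    (hu : Tendsto u F (𝓝 (t : ℂ))) (hv : Tendsto v F (𝓝 (s : ℂ))) (hs : s ∈ μb.support) :
    t ∉ μa.support := fun ht => by
  have hu' : Tendsto u F (𝓝[ℂ⁺] (t : ℂ)) :=
    tendsto_nhdsWithin_iff.mpr ⟨hu, hp.mono fun z hz => hz.left_im_pos⟩
  have hv' : Tendsto v F (𝓝[ℂ⁺] (s : ℂ)) :=
    tendsto_nhdsWithin_iff.mpr ⟨hv, hp.mono fun z hz => hz.right_im_pos⟩
  obtain ⟨z, hz, hza, hzb⟩ := (hp.and <|
    (((ha.norm_mTr_sq_isLittleO_Inu ht).comp_tendsto hu').def (c := 1 / 4) (by norm_num)).and <|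
    ((hb.norm_mTr_sq_isLittleO_Inu hs).comp_tendsto hv').def (c := 1 / 4) (by norm_num)).exists
  have hIa := Inu_pos (mem_offSupport_of_im_pos (μ := μa) hz.left_im_pos)
  have hIb := Inu_pos (mem_offSupport_of_im_pos (μ := μb) hz.right_im_pos)
  simp only [Function.comp_apply, norm_pow, norm_norm, hz.mTr_left, hz.mTr_right,
    Real.norm_of_nonneg hIa.le, Real.norm_of_nonneg hIb.le] at hza hzb
  have hprod : (Inu μa (u z) + Inu μb (v z)) * ‖n z‖ ^ 2 ≤
      1 / 2 * (Inu μa (u z) * Inu μb (v z)) := by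
    linear_combination Inu μa (u z) * hzb + Inu μb (v z) * hza
  linarith [hz.Inu_mul_Inu_lt, mul_pos hIa hIb]

end LimitPoints

lemma exists_Inu_mul_sq_le_of_tendsto_nhds {X : Type*} {μ : Measure ℝ} [IsProbabilityMeasure μ]
    {F : Filter X} {v : X → ℂ} {v₀ : ℂ} (hv : Tendsto v F (𝓝 v₀)) (hv₀ : v₀ ∈ offSupport μ)
    (L : ℝ) : ∃ C, ∀ᶠ x in F, Inu μ (v x) * (L + ‖v x‖) ^ 2 ≤ C := by
  obtain ⟨C, hC⟩ := eventually_Inu_le hv₀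
  have hnorm : ∀ᶠ x in F, (L + ‖v x‖) ^ 2 < (L + ‖v₀‖) ^ 2 + 1 :=
    ((tendsto_const_nhds.add hv.norm).pow 2).eventually_lt_const (lt_add_one _)
  refine ⟨C * ((L + ‖v₀‖) ^ 2 + 1), ?_⟩
  filter_upwards [hv.eventually hC, hnorm] with x hx hx'
  have hI : 0 ≤ Inu μ (v x) := integral_nonneg fun y => inv_nonneg.mpr (normSq_nonneg _)
  exact mul_le_mul hx hx'.le (by positivity) (hI.trans hx)

section LimitsOffSupport

variable {μa μb : Measure ℝ} [IsProbabilityMeasure μa] [IsProbabilityMeasure μb]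
  [NullSingletonClass μa] [NullSingletonClass μb] {u v n : ℂ → ℂ} {F : Ultrafilter ℂ}

lemma exists_ofReal_eq_of_tendsto (ha : IsSquareSingular μa) (hb : IsSquareSingular μb)
    (hp : ∀ᶠ z in (F : Filter ℂ), SubordinationPoint μa μb (u z) (v z) (n z) z)
    (hn : Tendsto (fun z => (n z).im) F (𝓝 0)) {u₀ : ℂ} (hu : Tendsto u F (𝓝 u₀)) :
    ∃ t : ℝ, (t : ℂ) = u₀ ∧ t ∉ μa.support := by
  lift u₀ to ℝ using im_eq_zero_of_tendsto hp hn hu with t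
  refine ⟨t, rfl, ?_⟩
  obtain ⟨L, hL₀, hL⟩ := exists_forall_abs_le hb.isCompact_support
  obtain hv | ⟨v₀, hv⟩ := tendsto_cobounded_or_exists_tendsto_nhds F v
  · have hfar := (tendsto_norm_cobounded_atTop.comp hv).eventually_ge_atTop (2 * L)
    exact notMem_support_of_tendsto_of_Inu_mul_sq_le ha hL₀ hL hp hu
      (hfar.mono fun z hz => Inu_mul_sq_le hL₀ hL hz)
  lift v₀ to ℝ using im_eq_zero_of_tendsto (hp.mono fun z hz => hz.symm) hn hv with s
  by_cases hs : s ∈ μb.support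
  · exact notMem_support_of_tendsto_of_mem_support ha hb hp hu hv hs
  · obtain ⟨C, hC⟩ := exists_Inu_mul_sq_le_of_tendsto_nhds hv (ofReal_mem_offSupport.mpr hs) L
    exact notMem_support_of_tendsto_of_Inu_mul_sq_le ha hL₀ hL hp hu hC

end LimitsOffSupport

/-! ### The density as an inverse branch -/

section InverseBranch

variable {μa μb : Measure ℝ} {u v n ga gb Z : ℂ → ℂ} {F la lb : Filter ℂ} {m₀ E₀ : ℝ}

lemma IsLocalInverse.tendsto_value (ha : IsLocalInverse μa ga la m₀) (hu : Tendsto u F la)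
    (hp : ∀ᶠ z in F, SubordinationPoint μa μb (u z) (v z) (n z) z) : Tendsto n F (𝓝 (m₀ : ℂ)) :=
  (ha.tendsto.comp hu).congr' (hp.mono fun _ hz => hz.mTr_left)

variable [IsProbabilityMeasure μa] [IsProbabilityMeasure μb] [F.NeBot]

lemma isInverseBranch_of_isLocalInverse
    (hp : ∀ z, 0 < z.im → SubordinationPoint μa μb (u z) (v z) (n z) z)
    (hn : ContinuousOn n ℂ⁺) (hF : F ≤ 𝓝[ℂ⁺] (E₀ : ℂ))
    (ha : IsLocalInverse μa ga la m₀) (hb : IsLocalInverse μb gb lb m₀)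
    (hu : Tendsto u F la) (hv : Tendsto v F lb) (hZ : RealAnalyticAt Z m₀)
    (hZg : ∀ᶠ m in 𝓝 (m₀ : ℂ), 0 < m.im → Z m = ga m + gb m + m⁻¹) :
    IsInverseBranch Z n m₀ E₀ := by
  have hpF := Eventually.mono (hF self_mem_nhdsWithin) hp
  have hnF := ha.tendsto_value hu hpF
  refine isInverseBranch_of_tendsto hF hn (fun z hz => (hp z hz).value_im_pos) hZ ?_ hnF ?_
  · filter_upwards [ha.right_inv, hb.right_inv, hZg] with m hma hmb hZm him hZim
    exact (hp _ hZim).value_unique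
      ⟨(hma him).1, (hmb him).1, hZim, (hma him).2, (hmb him).2, (hZm him).symm⟩
  · filter_upwards [hpF, hu.eventually ha.left_inv, hv.eventually hb.left_inv,
      hnF.eventually hZg] with z hz hga hgb hZn
    rw [hz.mTr_left] at hga
    rw [hz.mTr_right] at hgb
    rw [hZn hz.value_im_pos, hga, hgb, hz.add_add_inv]

lemma exists_isInverseBranch_of_tendsto_nhds
    (hp : ∀ z, 0 < z.im → SubordinationPoint μa μb (u z) (v z) (n z) z)
    (hn : ContinuousOn n ℂ⁺) (hF : F ≤ 𝓝[ℂ⁺] (E₀ : ℂ)) {t s : ℝ} (ht : t ∉ μa.support)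
    (hs : s ∉ μb.support) (hu : Tendsto u F (𝓝 (t : ℂ))) (hv : Tendsto v F (𝓝 (s : ℂ))) :
    ∃ (m₀ : ℝ) (Z : ℂ → ℂ), IsInverseBranch Z n m₀ E₀ := by
  have hpF := Eventually.mono (hF self_mem_nhdsWithin) hp
  obtain ⟨m₀, ga, ha, hga⟩ := exists_isLocalInverse_nhds ht
  obtain ⟨m₁, gb, hb, hgb⟩ := exists_isLocalInverse_nhds hs
  have hnF := ha.tendsto_value hu hpF
  obtain rfl : m₀ = m₁ := ofReal_injective <|
    tendsto_nhds_unique hnF (hb.tendsto_value hv (hpF.mono fun _ hz => hz.symm))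
  have hm₀ : (m₀ : ℂ) ≠ 0 := by
    have hlim : (m₀ : ℂ) * (E₀ - t - s) = 1 := tendsto_nhds_unique_of_eventuallyEq
      (hnF.mul (((tendsto_id'.mpr (hF.trans nhdsWithin_le_nhds)).sub hu).sub hv))
      tendsto_const_nhds (by
        filter_upwards [hpF] with z hz
        rw [id, show z - u z - v z = (n z)⁻¹ by linear_combination -hz.add_add_inv,
          mul_inv_cancel₀ hz.value_ne_zero])
    exact left_ne_zero_of_mul_eq_one hlim
  exact ⟨m₀, _, isInverseBranch_of_isLocalInverse hp hn hF ha hb hu hv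
    ((hga.add hgb).add (RealAnalyticAt.id.inv hm₀)) (Eventually.of_forall fun _ _ => rfl)⟩

lemma exists_isInverseBranch_of_tendsto_cobounded (hμb : IsCompact μb.support)
    (hp : ∀ z, 0 < z.im → SubordinationPoint μa μb (u z) (v z) (n z) z)
    (hn : ContinuousOn n ℂ⁺) (hF : F ≤ 𝓝[ℂ⁺] (E₀ : ℂ)) {t : ℝ} (ht : t ∉ μa.support)
    (hu : Tendsto u F (𝓝 (t : ℂ))) (hv : Tendsto v F (Bornology.cobounded ℂ)) :
    ∃ (m₀ : ℝ) (Z : ℂ → ℂ), IsInverseBranch Z n m₀ E₀ := by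
  have hpF := Eventually.mono (hF self_mem_nhdsWithin) hp
  obtain ⟨m₀, ga, ha, hga⟩ := exists_isLocalInverse_nhds ht
  obtain ⟨gb, R, hb, hR, hRg⟩ := exists_isLocalInverse_cobounded hμb
  obtain rfl : m₀ = 0 := ofReal_injective <| tendsto_nhds_unique (ha.tendsto_value hu hpF)
    (hb.tendsto_value hv (hpF.mono fun _ hz => hz.symm))
  refine ⟨0, _, isInverseBranch_of_isLocalInverse hp hn hF ha hb hu hv (hga.add hR) ?_⟩
  rw [ofReal_zero]
  filter_upwards [hRg] with m hm him
  rw [hm him, add_assoc]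

lemma not_tendsto_cobounded_of_tendsto_cobounded (hμb : IsCompact μb.support)
    (hp : ∀ᶠ z in F, SubordinationPoint μa μb (u z) (v z) (n z) z) (hF : F ≤ 𝓝 (E₀ : ℂ))
    (hv : Tendsto v F (Bornology.cobounded ℂ)) : ¬ Tendsto u F (Bornology.cobounded ℂ) := by
  obtain ⟨gb, R, hb, hR, hRg⟩ := exists_isLocalInverse_cobounded hμb
  have hnF := hb.tendsto_value hv (hp.mono fun _ hz => hz.symm)
  have hu : Tendsto u F (𝓝 ((E₀ : ℂ) - R (0 : ℝ))) := by
    refine ((tendsto_id'.mpr hF).sub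
      (hR.analyticAt.continuousAt.tendsto.comp hnF)).congr' ?_
    rw [ofReal_zero] at hnF
    filter_upwards [hp, hv.eventually hb.left_inv, hnF.eventually hRg] with z hz hgb hRn
    rw [hz.mTr_right] at hgb
    rw [id, Function.comp_apply, hRn hz.value_im_pos, hgb]
    linear_combination -hz.add_add_inv
  exact hu.not_tendsto (Metric.disjoint_nhds_cobounded _)

end InverseBranch

theorem exists_isInverseBranch {μa μb : Measure ℝ} [IsProbabilityMeasure μa]
    [IsProbabilityMeasure μb] [NullSingletonClass μa] [NullSingletonClass μb]
    (ha : IsSquareSingular μa) (hb : IsSquareSingular μb) {u v n : ℂ → ℂ}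
    (hp : ∀ z, 0 < z.im → SubordinationPoint μa μb (u z) (v z) (n z) z)
    (hn : ContinuousOn n ℂ⁺) {F : Ultrafilter ℂ} {E₀ : ℝ} (hF : (F : Filter ℂ) ≤ 𝓝[ℂ⁺] (E₀ : ℂ))
    (him : Tendsto (fun z => (n z).im) F (𝓝 0)) :
    ∃ (m₀ : ℝ) (Z : ℂ → ℂ), IsInverseBranch Z n m₀ E₀ := by
  have hpF := Eventually.mono (hF self_mem_nhdsWithin) hp
  have hp' := fun z hz => (hp z hz).symm
  have hpF' := hpF.mono fun _ hz => hz.symm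
  obtain hu | ⟨u₀, hu⟩ := tendsto_cobounded_or_exists_tendsto_nhds F u <;>
    obtain hv | ⟨v₀, hv⟩ := tendsto_cobounded_or_exists_tendsto_nhds F v
  · exact absurd hu <| not_tendsto_cobounded_of_tendsto_cobounded hb.isCompact_support hpF
      (hF.trans nhdsWithin_le_nhds) hv
  · obtain ⟨s, rfl, hs⟩ := exists_ofReal_eq_of_tendsto hb ha hpF' him hv
    exact exists_isInverseBranch_of_tendsto_cobounded ha.isCompact_support hp' hn hF hs hv hu
  · obtain ⟨t, rfl, ht⟩ := exists_ofReal_eq_of_tendsto ha hb hpF him hu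
    exact exists_isInverseBranch_of_tendsto_cobounded hb.isCompact_support hp hn hF ht hu hv
  · obtain ⟨t, rfl, ht⟩ := exists_ofReal_eq_of_tendsto ha hb hpF him hu
    obtain ⟨s, rfl, hs⟩ := exists_ofReal_eq_of_tendsto hb ha hpF' him hv
    exact exists_isInverseBranch_of_tendsto_nhds hp hn hF ht hs hu hv

/-! ### Stieltjes inversion -/

lemma integrable_of_withDensity_ofReal {X : Type*} [MeasurableSpace X] {μ : Measure X} {r : X → ℝ}
    (hr : AEStronglyMeasurable r μ) (h0 : ∀ x, 0 ≤ r x)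
    [IsFiniteMeasure (μ.withDensity fun x => ENNReal.ofReal (r x))] : Integrable r μ := by
  refine ⟨hr, (hasFiniteIntegral_iff_ofReal (ae_of_all _ h0)).mpr ?_⟩
  rw [← setLIntegral_univ, ← withDensity_apply _ MeasurableSet.univ]
  exact measure_lt_top _ _

lemma mTr_im_withDensity {r : ℝ → ℝ} (hr : Measurable r) (h0 : ∀ x, 0 ≤ r x)
    [IsFiniteMeasure (volume.withDensity fun x => ENNReal.ofReal (r x))] (E : ℝ) {η : ℝ}
    (hη : 0 < η) :
    (mTr (volume.withDensity fun x => ENNReal.ofReal (r x)) (E + η * I)).im =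
      ∫ x, η / ((x - E) ^ 2 + η ^ 2) * r x := by
  have him : ((E : ℂ) + η * I).im = η := by simp
  rw [mTr_im (mem_offSupport_of_im_pos (him.symm ▸ hη)), Inu,
    integral_withDensity_eq_integral_toReal_smul (by fun_prop) (ae_of_all _ (by simp)),
    ← integral_const_mul, him]
  refine integral_congr_ae (ae_of_all _ fun x => ?_)
  have hsq : normSq ((x : ℂ) - (E + η * I)) = (x - E) ^ 2 + η ^ 2 := by
    simp [normSq_apply]
    ring
  simp only [hsq, ENNReal.toReal_ofReal (h0 x), smul_eq_mul]
  ring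

lemma tendsto_norm_mul_cauchy_cobounded :
    Tendsto (fun x : ℝ => ‖x‖ * (π⁻¹ * (1 + x ^ 2)⁻¹)) (Bornology.cobounded ℝ) (𝓝 0) := by
  refine squeeze_zero (g := fun x : ℝ => π⁻¹ * ‖x‖⁻¹) (fun x => by positivity) (fun x => ?_) ?_
  · rcases eq_or_ne x 0 with rfl | hx
    · simp
    have hx' : 0 < ‖x‖ := norm_pos_iff.mpr hx
    rw [mul_left_comm, ← sq_abs, ← Real.norm_eq_abs, ← div_eq_mul_inv, inv_eq_one_div ‖x‖]
    gcongr ?_ * ?_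
    rw [div_le_div_iff₀ (by positivity) hx']
    nlinarith
  · simpa using (tendsto_inv_atTop_zero.comp (tendsto_norm_cobounded_atTop (E := ℝ))).const_mul π⁻¹

theorem tendsto_im_mTr_withDensity {r : ℝ → ℝ} (hr : Measurable r) (h0 : ∀ x, 0 ≤ r x)
    [IsFiniteMeasure (volume.withDensity fun x => ENNReal.ofReal (r x))] {E : ℝ}
    (hE : ContinuousAt r E) :
    Tendsto (fun η : ℝ => (mTr (volume.withDensity fun x => ENNReal.ofReal (r x)) (E + η * I)).im)
      (𝓝[>] 0) (𝓝 (π * r E)) := by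
  have hlim := tendsto_integral_comp_smul_smul_of_integrable' (μ := (volume : Measure ℝ))
    (φ := fun x : ℝ => π⁻¹ * (1 + x ^ 2)⁻¹) (x₀ := E) (fun x => by positivity)
    (by rw [integral_const_mul, integral_univ_inv_one_add_sq, inv_mul_cancel₀ Real.pi_ne_zero])
    (by simpa only [Module.finrank_self, pow_one] using tendsto_norm_mul_cauchy_cobounded)
    (integrable_of_withDensity_ofReal hr.aestronglyMeasurable h0) hE
  refine ((hlim.comp tendsto_inv_nhdsGT_zero).const_mul π).congr' ?_
  filter_upwards [self_mem_nhdsWithin] with η hη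
  have hη : 0 < η := hη
  rw [mTr_im_withDensity hr h0 E hη, Function.comp_apply, ← integral_const_mul]
  refine integral_congr_ae (ae_of_all _ fun x => ?_)
  simp only [Module.finrank_self, pow_one, smul_eq_mul]
  field_simp
  ring

lemma exists_ne_zero_of_mem_msupport_withDensity {r : ℝ → ℝ} {μ : Measure ℝ} {U : Set ℝ} {x : ℝ}
    (hx : x ∈ msupport (μ.withDensity fun y => ENNReal.ofReal (r y))) (hU : IsOpen U)
    (hxU : x ∈ U) : ∃ y ∈ U, r y ≠ 0 := by
  by_contra! h
  have hpos := hx U hU hxU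
  rw [withDensity_apply _ hU.measurableSet,
    setLIntegral_congr_fun (g := 0) hU.measurableSet (fun y hy => by simp [h y hy])] at hpos
  simp at hpos

lemma frequently_ne_zero_of_msupport {r : ℝ → ℝ} {μ : Measure ℝ} {E₀ ε₀ : ℝ} (hε₀ : 0 < ε₀)
    (h : ∀ ε : ℝ, 0 < ε → ε < ε₀ →
      E₀ - ε ∈ msupport (μ.withDensity fun y => ENNReal.ofReal (r y)) ∧
      E₀ + ε ∈ msupport (μ.withDensity fun y => ENNReal.ofReal (r y))) :
    (∃ᶠ E in 𝓝[>] E₀, r E ≠ 0) ∧ ∃ᶠ E in 𝓝[<] E₀, r E ≠ 0 := by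
  have hhalf : ∀ d > 0, 0 < min d ε₀ / 2 ∧ min d ε₀ / 2 < d ∧ min d ε₀ / 2 < ε₀ := fun d hd => by
    exact ⟨half_pos (lt_min hd hε₀), by linarith [min_le_left d ε₀],
      by linarith [min_le_right d ε₀]⟩
  refine ⟨(nhdsGT_basis E₀).frequently_iff.mpr fun b hb => ?_,
    (nhdsLT_basis E₀).frequently_iff.mpr fun a ha => ?_⟩
  · obtain ⟨hpos, hlt, hltε⟩ := hhalf (b - E₀) (sub_pos.mpr hb)
    exact exists_ne_zero_of_mem_msupport_withDensity (h _ hpos hltε).2 isOpen_Ioo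
      ⟨by linarith, by linarith⟩
  · obtain ⟨hpos, hlt, hltε⟩ := hhalf (E₀ - a) (sub_pos.mpr ha)
    exact exists_ne_zero_of_mem_msupport_withDensity (h _ hpos hltε).1 isOpen_Ioo
      ⟨by linarith, by linarith⟩

/-! ### Cubic-root cusps of free convolutions -/

theorem statement19_general (μa μb : Measure ℝ) [IsProbabilityMeasure μa] [IsProbabilityMeasure μb]
    [NullSingletonClass μa] [NullSingletonClass μb] (ha : IsSquareSingular μa)
    (hb : IsSquareSingular μb) (ωa ωb : ℂ → ℂ) (hsub : IsPairSubordination μa μb ωa ωb)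
    (ν : Measure ℝ) (hν : IsFreeConv μa μb ωb ν)
    (ρab : ℝ → ℝ) (hcont : Continuous ρab) (hnn : ∀ x, 0 ≤ ρab x)
    (hdens : ν = volume.withDensity (fun x => ENNReal.ofReal (ρab x)))
    (E₀ : ℝ) (hE₀ : E₀ ∈ frontier {E : ℝ | 0 < ρab E})
    (hint : ∃ ε₀ > (0 : ℝ), ∀ ε : ℝ, 0 < ε → ε < ε₀ →
      E₀ - ε ∈ msupport ν ∧ E₀ + ε ∈ msupport ν) :
    HasCubicRootCusp ρab E₀ := by
  have := hν.1
  have hlim (E : ℝ) : Tendsto (fun η : ℝ => (mTr ν (E + η * I)).im) (𝓝[>] 0) (𝓝 (π * ρab E)) := by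
    subst hdens
    exact tendsto_im_mTr_withDensity hcont.measurable hnn hcont.continuousAt
  have hρ₀ : ρab E₀ = 0 := (not_lt.mp
    ((isOpen_lt continuous_const hcont).frontier_eq ▸ hE₀).2).antisymm (hnn E₀)
  obtain ⟨F, hF⟩ := Ultrafilter.exists_le (map (fun η : ℝ => (E₀ : ℂ) + η * I) (𝓝[>] 0))
  have hlim₀ : Tendsto (fun z => (mTr ν z).im) F (𝓝 (π * ρab E₀)) :=
    Tendsto.mono_left (tendsto_map'_iff.mpr (hlim E₀)) hF
  rw [hρ₀, mul_zero] at hlim₀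
  obtain ⟨m₀, Z, hZ⟩ := exists_isInverseBranch ha hb
    (fun z hz => (hν.2 z hz).symm ▸ hsub.subordinationPoint hz)
    (fun z hz => (analyticAt_mTr (mem_offSupport_of_im_pos hz)).continuousAt.continuousWithinAt)
    (hF.trans (tendsto_ofReal_add_mul_I E₀)) hlim₀
  obtain ⟨ε₀, hε₀, hsupp⟩ := hint
  obtain ⟨hright, hleft⟩ := frequently_ne_zero_of_msupport hε₀ (hdens ▸ hsupp)
  exact .of_const_mul Real.pi_pos <| hZ.hasCubicRootCusp hlim
    (hright.mono fun E hE => mul_ne_zero Real.pi_ne_zero hE)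
    (hleft.mono fun E hE => mul_ne_zero Real.pi_ne_zero hE)

/-- Theorem 2.6, interior points: two-sided cubic-root cusp of the
density of `μ_α ⊞ μ_β` at any interior point `E₀` of `𝒱_{α⊞β}`. -/
theorem statement19 (μa μb : Measure ℝ)
    (da : AbsJacobiData μa) (db : AbsJacobiData μb)
    (ωa ωb : ℂ → ℂ) (hsub : IsPairSubordination μa μb ωa ωb)
    (ν : Measure ℝ) (hν : IsFreeConv μa μb ωb ν)
    (ρab : ℝ → ℝ) (hcont : Continuous ρab) (hnn : ∀ x, 0 ≤ ρab x)
    (hdens : ν = volume.withDensity (fun x => ENNReal.ofReal (ρab x)))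
    (E0 : ℝ) (hE0 : E0 ∈ frontier {E : ℝ | 0 < ρab E})
    (hint : ∃ ε₀ > (0 : ℝ), ∀ ε : ℝ, 0 < ε → ε < ε₀ →
      E0 - ε ∈ msupport ν ∧ E0 + ε ∈ msupport ν) :
    ∃ C2 > (0 : ℝ), ∃ K > (0 : ℝ), ∃ δ > (0 : ℝ),
      ∀ E : ℝ, 0 < |E - E0| → |E - E0| < δ →
        |ρab E - C2 * |E - E0| ^ ((1 : ℝ) / 3)| ≤ K * |E - E0| ^ ((2 : ℝ) / 3) := by
  have := da.prob
  have := db.prob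
  have := da.nullSingletonClass
  have := db.nullSingletonClass
  obtain ⟨C, hC, K, hK, hcusp⟩ := statement19_general μa μb da.isSquareSingular
    db.isSquareSingular ωa ωb hsub ν hν ρab hcont hnn hdens E0 hE0 hint
  obtain ⟨δ, hδ, hcusp⟩ := Metric.eventually_nhds_iff.mp hcusp
  exact ⟨C, hC, K, hK, δ, hδ, fun E _ hE => hcusp hE⟩

end
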